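/- arXiv:1410.7910 — 2 statements merged into one kernel-verified Lean document; each statement's English description precedes it below -/
import Mathlib

section
/- For every m ≥ 1, the numbers of short circuits in the random cubic configuration-model multigraph converge jointly in distribution to independent Poisson random variables with means λ_i = 2^i/(2i): for all natural numbers j_1, …, j_m, the proportion of ω ∈ Ω_N with X_{N,i}(ω) = j_i for every i = 1, …, m converges, as N → ∞ through even values of N, to ∏_{i=1}^{m} e^{-λ_i}·λ_i^{j_i}/(j_i !), where λ_i = 2^i/(2i). -/
open Filter Real Topology

/-- `Omega N`: the perfect matchings of the `3N` half-edges, i.e. fixed-point-free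
involutions of `Fin (3N)`. -/
def Omega (N : ℕ) : Type := {ω : Equiv.Perm (Fin (3 * N)) // ∀ a, ω (ω a) = a ∧ ω a ≠ a}

instance (N : ℕ) : Fintype (Omega N) := by unfold Omega; exact Subtype.fintype _

/-- The block (vertex) containing a half-edge: `B_v = {3v, 3v+1, 3v+2}`. -/
def blk {N : ℕ} (a : Fin (3 * N)) : Fin N := ⟨a.val / 3, by have := a.isLt; omega⟩

/-- The multiplicity of the pair of blocks `{u, v}` in the multigraph `Γ(ω)`:
for `u ≠ v` the number of half-edges in `B_u` matched into `B_v`; for `u = v`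
the number of matched pairs contained in `B_u` (loops at `u`). -/
noncomputable def mult {N : ℕ} (ω : Omega N) (u v : Fin N) : ℕ :=
  if u = v then Nat.card {a : Fin (3 * N) // blk a = u ∧ blk (ω.val a) = u} / 2
  else Nat.card {a : Fin (3 * N) // blk a = u ∧ blk (ω.val a) = v}

/-- `X_{N,1}`: the number of matched pairs contained in a single block (loops).
Each such pair `{a, ω a}` contributes its two half-edges, whence the division by 2. -/
noncomputable def X1 {N : ℕ} (ω : Omega N) : ℕ :=
  Nat.card {a : Fin (3 * N) // blk (ω.val a) = blk a} / 2

/-- `X_{N,2}`: the number of unordered pairs of distinct matched pairs joining the same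
two distinct blocks: over each unordered pair of distinct blocks of multiplicity `m`
there are `C(m, 2)` such pairs of parallel edges. -/
noncomputable def X2 {N : ℕ} (ω : Omega N) : ℕ :=
  ∑ u : Fin N, ∑ v : Fin N, if u < v then Nat.choose (mult ω u v) 2 else 0

/-- `X_{N,k}` for `k ≥ 3`: the number of `k`-cycles of `Γ(ω)`.  A `k`-cycle is counted
via its `2k` rooted directed traversals: a traversal is an injective cyclic sequence of
blocks `c : ZMod k → Fin N` together with half-edges `h i ∈ B_{c i}` matched into
`B_{c (i+1)}`. -/
noncomputable def Xcyc {N : ℕ} (k : ℕ) (ω : Omega N) : ℕ :=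
  Nat.card {p : (ZMod k → Fin N) × (ZMod k → Fin (3 * N)) //
    Function.Injective p.1 ∧
      ∀ i, blk (p.2 i) = p.1 i ∧ blk (ω.val (p.2 i)) = p.1 (i + 1)} / (2 * k)

/-- The circuit-counting random variables `X_{N,k}`. -/
noncomputable def X {N : ℕ} (ω : Omega N) : ℕ → ℕ
  | 1 => X1 ω
  | 2 => X2 ω
  | k => Xcyc k ω

/-!
Conditioning a uniform perfect matching on containing a prescribed edge amounts to a switching: it
moves the partners of at most two half-edges. Conditioning on a whole circuit of length `k`
therefore has, up to an error `O(1 / N)`, no effect on the numbers of the other circuits. Counting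
pairs of a matching and one of its `k`-circuits thus gives, for the probabilities `p` of the joint
counts, `(j k + 1) * p (j + single k 1) - λ k * p j → 0`, where `λ k` is the limiting mean number of
`k`-circuits. By Markov's inequality `p` is tight, and the only probability weight satisfying this
recurrence is the product Poisson one.
-/

namespace ConfigurationModel

open Finset
open scoped Classical

section Prob

variable {Ω : Type*} {S : Finset Ω} {P Q R : Ω → Prop}

/-- The probability of `Q` under the uniform distribution on `S`. It is `0` for empty `S`. -/
noncomputable def prob (S : Finset Ω) (Q : Ω → Prop) : ℝ :=
  #{ω ∈ S | Q ω} / #S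

lemma prob_eq [DecidablePred Q] : prob S Q = #{ω ∈ S | Q ω} / #S := by
  unfold prob
  congr!

lemma prob_nonneg : 0 ≤ prob S Q := by unfold prob; positivity

lemma prob_le_one : prob S Q ≤ 1 :=
  div_le_one_of_le₀ (mod_cast card_filter_le _ _) (Nat.cast_nonneg _)

lemma prob_congr (h : ∀ ω ∈ S, P ω ↔ Q ω) : prob S P = prob S Q := by
  rw [prob, prob, filter_congr h]

lemma prob_mono (h : ∀ ω ∈ S, P ω → Q ω) : prob S P ≤ prob S Q := by
  unfold prob
  gcongr with ω hω
  exact h ω hω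

lemma prob_eq_one (hS : S.Nonempty) (h : ∀ ω ∈ S, Q ω) : prob S Q = 1 := by
  rw [prob, filter_true_of_mem h, div_self (mod_cast hS.card_ne_zero)]

lemma prob_or_le : prob S (fun ω => P ω ∨ Q ω) ≤ prob S P + prob S Q := by
  rw [prob_eq, prob_eq, prob_eq, ← add_div, filter_or]
  gcongr
  exact_mod_cast card_union_le _ _

lemma prob_exists_le {κ : Type*} (T : Finset κ) (Q : κ → Ω → Prop) :
    prob S (fun ω => ∃ c ∈ T, Q c ω) ≤ ∑ c ∈ T, prob S (Q c) := by
  simp only [prob_eq]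
  rw [← sum_div]
  gcongr
  calc (#{ω ∈ S | ∃ c ∈ T, Q c ω} : ℝ) ≤ #(T.biUnion fun c => {ω ∈ S | Q c ω}) := by
        gcongr
        exact fun ω hω => by simpa [and_left_comm] using hω
    _ ≤ ∑ c ∈ T, (#{ω ∈ S | Q c ω} : ℝ) := mod_cast card_biUnion_le

lemma prob_not (hS : S.Nonempty) : prob S (fun ω => ¬ Q ω) = 1 - prob S Q := by
  have hS' : (#S : ℝ) ≠ 0 := mod_cast hS.card_ne_zero
  rw [eq_sub_iff_add_eq', prob_eq, prob_eq, ← add_div, div_eq_one_iff_eq hS']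
  exact_mod_cast card_filter_add_card_filter_not Q

lemma abs_prob_sub_prob_le (h : ∀ ω ∈ S, ¬ R ω → (P ω ↔ Q ω)) :
    |prob S P - prob S Q| ≤ prob S R := by
  have hPQ : prob S P ≤ prob S Q + prob S R :=
    (prob_mono fun ω hω hP => or_iff_not_imp_right.2 fun hR => (h ω hω hR).1 hP).trans prob_or_le
  have hQP : prob S Q ≤ prob S P + prob S R :=
    (prob_mono fun ω hω hQ => or_iff_not_imp_right.2 fun hR => (h ω hω hR).2 hQ).trans prob_or_le
  exact abs_sub_le_iff.2 ⟨by linarith, by linarith⟩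

lemma prob_prod {Ω' : Type*} (S' : Finset Ω') (Q' : Ω' → Prop) :
    prob (S ×ˢ S') (fun p => Q p.1 ∧ Q' p.2) = prob S Q * prob S' Q' := by
  simp only [prob]
  rw [filter_product, card_product, card_product]
  push_cast
  rw [mul_div_mul_comm]

lemma prob_mul_prob_filter [DecidablePred P] :
    prob S P * prob {ω ∈ S | P ω} Q = prob S (fun ω => P ω ∧ Q ω) := by
  rcases eq_or_ne (#{ω ∈ S | P ω}) 0 with h | h
  · have : prob S (fun ω => P ω ∧ Q ω) ≤ prob S P := prob_mono fun _ _ => And.left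
    have hP : prob S P = 0 := by rw [prob_eq, h, Nat.cast_zero, zero_div]
    rw [hP, zero_mul]
    exact (prob_nonneg.antisymm (hP ▸ this))
  · rw [prob_eq, prob_eq, prob_eq, filter_filter, mul_comm, div_mul_div_cancel₀ (mod_cast h)]

lemma prob_univ [Fintype Ω] :
    prob univ Q = (Nat.card {ω // Q ω} : ℝ) / Nat.card Ω := by
  rw [prob, Nat.card_eq_fintype_card, Nat.card_eq_fintype_card, Fintype.card_subtype, card_univ]

lemma sum_prob_eq_sum_card {κ : Type*} (T : Finset κ) (Q : κ → Ω → Prop)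
    [∀ c, DecidablePred (Q c)] :
    ∑ c ∈ T, prob S (Q c) = (∑ ω ∈ S, #{c ∈ T | Q c ω} : ℕ) / #S := by
  simp only [prob_eq]
  rw [← sum_div, ← Nat.cast_sum]
  congr 2
  exact sum_card_bipartiteAbove_eq_sum_card_bipartiteBelow Q

lemma mul_prob_le_sum_prob {κ : Type*} (T : Finset κ) (Q : κ → Ω → Prop)
    [∀ c, DecidablePred (Q c)] (K : ℕ) :
    K * prob S (fun ω => K ≤ #{c ∈ T | Q c ω}) ≤ ∑ c ∈ T, prob S (Q c) := by
  rw [sum_prob_eq_sum_card, prob_eq, ← mul_div_assoc]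
  gcongr
  norm_cast
  rw [mul_comm, ← smul_eq_mul]
  exact (card_nsmul_le_sum _ _ _ fun ω hω => (mem_filter.1 hω).2).trans
    (sum_le_sum_of_subset (filter_subset _ _))

lemma sum_prob_and {κ : Type*} {T : Finset κ} {Q : κ → Ω → Prop} [∀ c, DecidablePred (Q c)]
    {K : ℕ} (h : ∀ ω ∈ S, R ω → #{c ∈ T | Q c ω} = K) :
    ∑ c ∈ T, prob S (fun ω => Q c ω ∧ R ω) = K * prob S R := by
  rw [sum_prob_eq_sum_card, prob_eq, ← mul_div_assoc]
  congr 1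
  norm_cast
  rw [card_filter, mul_sum]
  refine sum_congr rfl fun ω hω => ?_
  split_ifs with hR
  · simp [hR, h ω hω hR]
  · simp [hR]

lemma sum_prob_eq {κ : Type*} (T : Finset κ) (f : Ω → κ) :
    ∑ c ∈ T, prob S (fun ω => f ω = c) = prob S (fun ω => f ω ∈ T) := by
  have hcard (ω) (_ : ω ∈ S) (hω : f ω ∈ T) : #{c ∈ T | f ω = c} = 1 := by
    rw [Finset.filter_eq, if_pos hω, card_singleton]
  calc ∑ c ∈ T, prob S (fun ω => f ω = c) = ∑ c ∈ T, prob S (fun ω => f ω = c ∧ f ω ∈ T) :=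
        sum_congr rfl fun c hc => prob_congr fun ω _ => ⟨fun h => ⟨h, h ▸ hc⟩, And.left⟩
    _ = prob S (fun ω => f ω ∈ T) := by rw [sum_prob_and hcard, Nat.cast_one, one_mul]

end Prob

section PerfectMatching

variable {α : Type*}

/-- The perfect matchings of `α`, encoded as fixed-point-free involutions. -/
def PerfectMatching (α : Type*) : Type _ :=
  {ω : Equiv.Perm α // ∀ a, ω (ω a) = a ∧ ω a ≠ a}

namespace PerfectMatching

instance : CoeFun (PerfectMatching α) fun _ => α → α := ⟨fun ω => ω.1⟩

lemma apply_apply (ω : PerfectMatching α) (a : α) : ω (ω a) = a := (ω.2 a).1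

lemma apply_ne (ω : PerfectMatching α) (a : α) : ω a ≠ a := (ω.2 a).2

lemma apply_eq_comm (ω : PerfectMatching α) {a b : α} : ω a = b ↔ ω b = a :=
  ⟨fun h => h ▸ ω.apply_apply a, fun h => h ▸ ω.apply_apply b⟩

/-- The switching of the half-edges `x` and `y`: they exchange their partners. -/
noncomputable def switch (x y : α) (ω : PerfectMatching α) : PerfectMatching α :=
  ⟨Equiv.swap x y * ω.1 * Equiv.swap x y, fun a => by
    have h := ω.2 (Equiv.swap x y a)
    simpa [h.1, Equiv.swap_apply_eq_iff] using h.2⟩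

lemma switch_apply (x y a : α) (ω : PerfectMatching α) :
    switch x y ω a = Equiv.swap x y (ω (Equiv.swap x y a)) := rfl

lemma switch_switch (x y : α) (ω : PerfectMatching α) : switch x y (switch x y ω) = ω :=
  Subtype.ext <| Equiv.ext fun a => by
    rw [switch_apply, switch_apply, Equiv.swap_apply_self, Equiv.swap_apply_self]

lemma switch_apply_of_ne {x y a : α} {ω : PerfectMatching α} (hx : a ≠ x) (hy : a ≠ y)
    (hωx : ω a ≠ x) (hωy : ω a ≠ y) : switch x y ω a = ω a := by
  rw [switch_apply, Equiv.swap_apply_of_ne_of_ne hx hy, Equiv.swap_apply_of_ne_of_ne hωx hωy]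

noncomputable instance [Fintype α] : Fintype (PerfectMatching α) := Subtype.fintype _

lemma nonempty_of_even_card [Fintype α] (h : Even (Fintype.card α)) :
    Nonempty (PerfectMatching α) := by
  obtain ⟨r, hr⟩ := h
  have e : α ≃ Fin r ⊕ Fin r := Fintype.equivOfCardEq (by simp [hr])
  refine ⟨(e.trans (Equiv.sumComm _ _)).trans e.symm, fun a => ⟨by simp, ?_⟩⟩
  rw [Equiv.trans_apply, Equiv.trans_apply, Ne, Equiv.symm_apply_eq]
  cases e a <;> simp

variable [Fintype α]

/-- The matched pairs of a perfect matching. -/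
noncomputable def edges (ω : PerfectMatching α) : Finset (Sym2 α) :=
  univ.image fun a => s(a, ω a)

lemma mk_mem_edges {ω : PerfectMatching α} {a b : α} : s(a, b) ∈ ω.edges ↔ ω a = b := by
  simp only [edges, mem_image, mem_univ, true_and, Sym2.eq_iff]
  constructor
  · rintro ⟨c, ⟨rfl, h⟩ | ⟨rfl, h⟩⟩
    exacts [h, ω.apply_eq_comm.1 h]
  · exact fun h => ⟨a, Or.inl ⟨rfl, h⟩⟩

end PerfectMatching

/-- The half-edges that occur in a pair of `M`. -/
noncomputable def endpoints (M : Finset (Sym2 α)) : Finset α :=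
  M.biUnion Sym2.toFinset

lemma mem_endpoints {M : Finset (Sym2 α)} {a : α} : a ∈ endpoints M ↔ ∃ e ∈ M, a ∈ e := by
  simp [endpoints]

lemma left_mem_endpoints {M : Finset (Sym2 α)} {a b : α} (h : s(a, b) ∈ M) : a ∈ endpoints M :=
  mem_endpoints.2 ⟨_, h, Sym2.mem_mk_left _ _⟩

lemma right_mem_endpoints {M : Finset (Sym2 α)} {a b : α} (h : s(a, b) ∈ M) : b ∈ endpoints M :=
  mem_endpoints.2 ⟨_, h, Sym2.mem_mk_right _ _⟩

lemma endpoints_mono {M M' : Finset (Sym2 α)} (h : M ⊆ M') : endpoints M ⊆ endpoints M' :=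
  biUnion_subset_biUnion_of_subset_left _ h

lemma card_endpoints_le (M : Finset (Sym2 α)) : #(endpoints M) ≤ 2 * #M := by
  rw [mul_comm]
  refine card_biUnion_le_card_mul _ _ _ fun e _ => ?_
  rw [Sym2.card_toFinset]
  split_ifs <;> decide

variable {M C : Finset (Sym2 α)} {a y : α}

/-- Distinct pairs of `M` are disjoint and none is a loop of `Sym2`, so that `M` is a matching
of its endpoints. -/
def IsPartialMatching (M : Finset (Sym2 α)) : Prop :=
  (∀ e ∈ M, ¬ e.IsDiag) ∧ ∀ e ∈ M, ∀ f ∈ M, ∀ a, a ∈ e → a ∈ f → e = f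

lemma IsPartialMatching.mono (hM : IsPartialMatching M) (h : C ⊆ M) : IsPartialMatching C :=
  ⟨fun e he => hM.1 e (h he), fun e he f hf => hM.2 e (h he) f (h hf)⟩

lemma IsPartialMatching.notMem_endpoints (hM : IsPartialMatching M) (hC : C ⊆ M) {e : Sym2 α}
    (he : e ∈ M) (heC : e ∉ C) (ha : a ∈ e) : a ∉ endpoints C := fun h => by
  obtain ⟨f, hf, haf⟩ := mem_endpoints.1 h
  exact heC (hM.2 e he f (hC hf) a ha haf ▸ hf)

variable [Fintype α]

open PerfectMatching

lemma mk_apply_mem {ω : PerfectMatching α} (h : M ⊆ ω.edges) (ha : a ∈ endpoints M) :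
    s(a, ω a) ∈ M := by
  obtain ⟨e, he, hae⟩ := mem_endpoints.1 ha
  obtain ⟨b, rfl⟩ := hae
  rwa [mk_mem_edges.1 (h he)]

lemma apply_mem_endpoints_iff {ω : PerfectMatching α} (h : M ⊆ ω.edges) :
    ω a ∈ endpoints M ↔ a ∈ endpoints M :=
  ⟨fun ha => left_mem_endpoints (by simpa [apply_apply, Sym2.eq_swap] using mk_apply_mem h ha),
    fun ha => right_mem_endpoints (mk_apply_mem h ha)⟩

/-- The perfect matchings that contain all pairs of `M`. -/
noncomputable def containing (M : Finset (Sym2 α)) : Finset (PerfectMatching α) :=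
  {ω | M ⊆ ω.edges}

lemma mem_containing {ω : PerfectMatching α} : ω ∈ containing M ↔ M ⊆ ω.edges := by
  simp [containing]

@[simp]
lemma containing_empty : containing (∅ : Finset (Sym2 α)) = univ := by simp [containing]

lemma subset_edges_switch {ω : PerfectMatching α} {x y : α} (h : M ⊆ ω.edges)
    (hx : x ∉ endpoints M) (hy : y ∉ endpoints M) : M ⊆ (switch x y ω).edges := by
  intro e he
  induction e with | h p q =>
  have hp := left_mem_endpoints he
  have hq := right_mem_endpoints he
  have hpq := mk_mem_edges.1 (h he)
  rw [mk_mem_edges, switch_apply_of_ne (ne_of_mem_of_not_mem hp hx)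
    (ne_of_mem_of_not_mem hp hy), hpq]
  exacts [hpq ▸ ne_of_mem_of_not_mem hq hx, hpq ▸ ne_of_mem_of_not_mem hq hy]

/-- The half-edges to which `a` can be matched without using an endpoint of `M`. -/
noncomputable def partners (M : Finset (Sym2 α)) (a : α) : Finset α :=
  univ \ insert a (endpoints M)

lemma mem_partners {c : α} : c ∈ partners M a ↔ c ≠ a ∧ c ∉ endpoints M := by
  simp [partners]

lemma card_le_card_partners_add (M : Finset (Sym2 α)) (a : α) :
    Fintype.card α ≤ #(partners M a) + 2 * #M + 1 := by
  have h := le_card_sdiff (insert a (endpoints M)) univ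
  have := card_insert_le a (endpoints M)
  have := card_endpoints_le M
  rw [card_univ] at h
  unfold partners
  omega

/-- Switching the partner of `a` with `y` is a bijection onto the matchings that in addition
contain `s(a, y)`, once the old partner of `a` is recorded. -/
lemma card_filter_containing (ha : a ∉ endpoints M) (hy : y ∉ endpoints M) (hay : a ≠ y)
    (Q : PerfectMatching α → Prop) :
    #{ω ∈ containing M | Q ω} =
      #{p ∈ partners M a ×ˢ containing (insert s(a, y) M) | Q (switch p.1 y p.2)} := by
  refine card_bij' (fun ω _ => (ω a, switch (ω a) y ω)) (fun p _ => switch p.1 y p.2) ?_ ?_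
    (fun ω _ => switch_switch _ _ _) ?_
  · intro ω hω
    simp only [mem_filter, mem_containing, mem_product, mem_partners, insert_subset_iff,
      mk_mem_edges, switch_switch] at hω ⊢
    have hωa : ω a ∉ endpoints M := (apply_mem_endpoints_iff hω.1).not.2 ha
    refine ⟨⟨⟨ω.apply_ne a, hωa⟩, ?_, subset_edges_switch hω.1 hωa hy⟩, hω.2⟩
    rw [switch_apply, Equiv.swap_apply_of_ne_of_ne (ω.apply_ne a).symm hay, Equiv.swap_apply_left]
  · rintro ⟨c, ω⟩ h
    simp only [mem_filter, mem_containing, mem_product, mem_partners, insert_subset_iff] at h ⊢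
    exact ⟨subset_edges_switch h.1.2.2 h.1.1.2 hy, h.2⟩
  · rintro ⟨c, ω⟩ h
    simp only [mem_filter, mem_containing, mem_product, mem_partners, insert_subset_iff,
      mk_mem_edges] at h
    have hc : switch c y ω a = c := by
      rw [switch_apply, Equiv.swap_apply_of_ne_of_ne h.1.1.1.symm hay, h.1.2.1,
        Equiv.swap_apply_right]
    simp only [hc, switch_switch]

lemma card_containing (ha : a ∉ endpoints M) (hy : y ∉ endpoints M) (hay : a ≠ y) :
    #(containing M) = #(partners M a) * #(containing (insert s(a, y) M)) := by
  simpa using card_filter_containing ha hy hay fun _ => True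

lemma prob_containing_eq_prob_switch (ha : a ∉ endpoints M) (hy : y ∉ endpoints M) (hay : a ≠ y)
    (Q : PerfectMatching α → Prop) :
    prob (containing M) Q =
      prob (partners M a ×ˢ containing (insert s(a, y) M)) fun p => Q (switch p.1 y p.2) := by
  rw [prob, prob, card_filter_containing ha hy hay, card_product, card_containing ha hy hay]

lemma mul_card_containing_insert_le {D : ℕ} {e : Sym2 α} (he : e ∉ M)
    (hD : D + 2 * #M + 1 ≤ Fintype.card α) :
    D * #(containing (insert e M)) ≤ #(containing M) := by
  induction e with | h a y =>
  rcases (containing (insert s(a, y) M)).eq_empty_or_nonempty with h | ⟨ω, hω⟩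
  · simp [h]
  · rw [mem_containing, insert_subset_iff, mk_mem_edges] at hω
    obtain ⟨rfl, hM⟩ := hω
    have ha : a ∉ endpoints M := fun ha => he (mk_apply_mem hM ha)
    rw [card_containing ha ((apply_mem_endpoints_iff hM).not.2 ha) (ω.apply_ne a).symm]
    have := card_le_card_partners_add M a
    gcongr
    omega

lemma pow_mul_card_containing_union_le {D : ℕ} (M C : Finset (Sym2 α))
    (hD : D + 2 * #(M ∪ C) ≤ Fintype.card α + 1) :
    D ^ #(C \ M) * #(containing (M ∪ C)) ≤ #(containing M) := by
  induction C using Finset.induction_on with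
  | empty => simp
  | insert e C he ih =>
    by_cases heM : e ∈ M
    · rw [union_insert, insert_eq_of_mem (mem_union_left _ heM), insert_sdiff_of_mem _ heM] at *
      exact ih hD
    · have heMC : e ∉ M ∪ C := by simp [heM, he]
      rw [union_insert, card_insert_of_notMem heMC] at hD
      rw [union_insert, insert_sdiff_of_notMem _ heM,
        card_insert_of_notMem (fun h => he (mem_sdiff.1 h).1), pow_succ, mul_assoc]
      calc D ^ #(C \ M) * (D * #(containing (insert e (M ∪ C))))
          ≤ D ^ #(C \ M) * #(containing (M ∪ C)) := by
            gcongr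
            exact mul_card_containing_insert_le heMC (by omega)
        _ ≤ #(containing M) := ih (by omega)

lemma filter_containing (M C : Finset (Sym2 α)) :
    {ω ∈ containing M | C ⊆ edges ω} = containing (M ∪ C) := by
  ext ω
  simp [mem_containing, union_subset_iff]

lemma prob_containing_subset_edges_le {D : ℕ} (hD₀ : 0 < D)
    (hD : D + 2 * #(M ∪ C) ≤ Fintype.card α + 1) :
    prob (containing M) (C ⊆ edges ·) ≤ (1 / D : ℝ) ^ #(C \ M) := by
  rw [prob_eq, filter_containing, one_div, inv_pow, ← one_div]
  rcases (containing M).eq_empty_or_nonempty with h | h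
  · simp [h]
  · rw [div_le_div_iff₀ (mod_cast h.card_pos) (by positivity), one_mul, mul_comm]
    exact_mod_cast pow_mul_card_containing_union_le M C hD

lemma IsPartialMatching.card_le (hM : IsPartialMatching M) :
    Fintype.card (PerfectMatching α) ≤ Fintype.card α ^ #M * #(containing M) := by
  induction M using Finset.induction_on with
  | empty => simp
  | insert e M he ih =>
    induction e with | h a y =>
    have ha := hM.notMem_endpoints (subset_insert _ _) (mem_insert_self _ _) he
      (Sym2.mem_mk_left a y)
    have hy := hM.notMem_endpoints (subset_insert _ _) (mem_insert_self _ _) he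
      (Sym2.mem_mk_right a y)
    have hay : a ≠ y := hM.1 _ (mem_insert_self _ _)
    calc Fintype.card (PerfectMatching α)
        ≤ Fintype.card α ^ #M * #(containing M) := ih (hM.mono (subset_insert _ _))
      _ ≤ Fintype.card α ^ #M * (Fintype.card α * #(containing (insert s(a, y) M))) := by
        rw [card_containing ha hy hay]
        gcongr
        exact card_le_univ _
      _ = _ := by rw [card_insert_of_notMem he, pow_succ, mul_assoc]

lemma IsPartialMatching.pow_le_prob [Nonempty (PerfectMatching α)] (hM : IsPartialMatching M) :
    (1 / Fintype.card α : ℝ) ^ #M ≤ prob univ (M ⊆ edges ·) := by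
  have h0 : 0 < Fintype.card α ^ #M :=
    Nat.pos_of_mul_pos_right (Fintype.card_pos.trans_le hM.card_le)
  rw [prob_eq, one_div, inv_pow, ← one_div,
    div_le_div_iff₀ (mod_cast h0) (mod_cast Fintype.card_pos), one_mul, mul_comm]
  exact_mod_cast hM.card_le

end PerfectMatching

section Conditioning

open PerfectMatching

variable {α : Type*} [Fintype α] {𝓒 : Finset (Finset (Sym2 α))} {M E C : Finset (Sym2 α)}
  {a c y : α} {ω : PerfectMatching α} {Q : PerfectMatching α → Prop} {D : ℕ} {ε : ℝ}

/-- The members of the family `𝓒` that share an endpoint with `E` without being part of `E`. -/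
noncomputable def overlapping (𝓒 : Finset (Finset (Sym2 α))) (E : Finset (Sym2 α)) :
    Finset (Finset (Sym2 α)) :=
  {C ∈ 𝓒 | ¬ C ⊆ E ∧ ¬ Disjoint (endpoints C) (endpoints E)}

lemma subset_edges_switch_iff (hω : ω a = y) (hca : c ≠ a) (ha : a ∉ endpoints C)
    (hy : y ∉ endpoints C) (hc : C ⊆ ω.edges → c ∉ endpoints C) :
    C ⊆ (switch c y ω).edges ↔ C ⊆ ω.edges := by
  refine ⟨fun h => ?_, fun h => subset_edges_switch h (hc h) hy⟩
  have hay : a ≠ y := hω ▸ (ω.apply_ne a).symm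
  have hac : switch c y ω a = c := by
    rw [switch_apply, Equiv.swap_apply_of_ne_of_ne hca.symm hay, hω, Equiv.swap_apply_right]
  have hc' : c ∉ endpoints C := hac ▸ (apply_mem_endpoints_iff h).not.2 ha
  exact switch_switch c y ω ▸ subset_edges_switch h hc' hy

lemma prob_exists_mem_endpoints_le
    (h𝓒 : ∑ C ∈ 𝓒, 2 * #C * prob (containing M) (C ⊆ edges ·) ≤ ε * D)
    {K : Finset α} (hD₀ : 0 < D) (hD : D ≤ #K) :
    prob (K ×ˢ containing M) (fun p => ∃ C ∈ 𝓒, p.1 ∈ endpoints C ∧ C ⊆ edges p.2) ≤ ε := by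
  have hD' : (0 : ℝ) < D := mod_cast hD₀
  have hendpoints (C : Finset (Sym2 α)) : prob K (· ∈ endpoints C) ≤ 2 * #C / D := by
    rw [prob_eq]
    gcongr
    exact_mod_cast (card_le_card fun a ha => (mem_filter.1 ha).2).trans (card_endpoints_le C)
  calc _ ≤ ∑ C ∈ 𝓒, prob (K ×ˢ containing M) (fun p => p.1 ∈ endpoints C ∧ C ⊆ edges p.2) :=
        prob_exists_le _ _
    _ ≤ ∑ C ∈ 𝓒, 2 * #C / D * prob (containing M) (C ⊆ edges ·) := by
        gcongr with C
        rw [prob_prod _ fun ω : PerfectMatching α => C ⊆ edges ω]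
        exact mul_le_mul_of_nonneg_right (hendpoints C) prob_nonneg
    _ = (∑ C ∈ 𝓒, 2 * #C * prob (containing M) (C ⊆ edges ·)) / D := by
        rw [sum_div]
        exact sum_congr rfl fun C _ => by ring
    _ ≤ ε := (div_le_iff₀ hD').2 h𝓒

lemma prob_exists_subset_edges_le
    (h : ∑ C ∈ overlapping 𝓒 E, prob (containing M) (C ⊆ edges ·) ≤ ε) :
    prob (containing M) (fun ω => ∃ C ∈ overlapping 𝓒 E, C ⊆ edges ω) ≤ ε :=
  (prob_exists_le _ _).trans h

/-- The switching at `c` and `y` is harmless if it neither destroys nor creates a member of `𝓒`. -/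
lemma apply_switch_iff (hyE : s(a, y) ∈ E) (hω : ω a = y) (hca : c ≠ a)
    (hbefore : ¬ ∃ C ∈ overlapping 𝓒 E, C ⊆ edges (switch c y ω))
    (hafter : ¬ ∃ C ∈ overlapping 𝓒 E, C ⊆ edges ω)
    (hhit : ¬ ∃ C ∈ 𝓒, c ∈ endpoints C ∧ C ⊆ edges ω)
    (hQ : ∀ ω ω', (∀ C ∈ 𝓒, ¬ C ⊆ E → (C ⊆ edges ω ↔ C ⊆ edges ω')) → (Q ω ↔ Q ω')) :
    Q (switch c y ω) ↔ Q ω := by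
  push Not at hbefore hafter hhit
  refine hQ _ _ fun C hC hCE => ?_
  by_cases hdisj : Disjoint (endpoints C) (endpoints E)
  · exact subset_edges_switch_iff hω hca
      (fun h => disjoint_left.1 hdisj h (left_mem_endpoints hyE))
      (fun h => disjoint_left.1 hdisj h (right_mem_endpoints hyE))
      fun h h' => hhit C hC h' h
  · have hCover : C ∈ overlapping 𝓒 E := mem_filter.2 ⟨hC, hCE, hdisj⟩
    exact iff_of_false (hbefore C hCover) (hafter C hCover)

lemma abs_prob_containing_sub_prob_containing_insert_le (hME : insert s(a, y) M ⊆ E)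
    (ha : a ∉ endpoints M) (hy : y ∉ endpoints M) (hay : a ≠ y)
    (hD₀ : 0 < D) (hD : D + 2 * #M + 1 ≤ Fintype.card α)
    (hover : ∀ M ⊆ E, ∑ C ∈ overlapping 𝓒 E, prob (containing M) (C ⊆ edges ·) ≤ ε)
    (hhit : ∀ M ⊆ E, ∑ C ∈ 𝓒, 2 * #C * prob (containing M) (C ⊆ edges ·) ≤ ε * D)
    (hQ : ∀ ω ω', (∀ C ∈ 𝓒, ¬ C ⊆ E → (C ⊆ edges ω ↔ C ⊆ edges ω')) → (Q ω ↔ Q ω')) :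
    |prob (containing M) Q - prob (containing (insert s(a, y) M)) Q| ≤ 3 * ε := by
  have hDK : D ≤ #(partners M a) := by have := card_le_card_partners_add M a; omega
  have hK : (partners M a).Nonempty := card_pos.1 (hD₀.trans_le hDK)
  have hM : M ⊆ E := (subset_insert _ _).trans hME
  generalize hM' : insert s(a, y) M = M' at hME
  have prob_snd (R : PerfectMatching α → Prop) :
      prob (partners M a ×ˢ containing M') (fun p => R p.2) = prob (containing M') R := by
    simpa [prob_eq_one hK] using
      prob_prod (S := partners M a) (Q := fun _ => True) (containing M') R
  have prob_switch (R : PerfectMatching α → Prop) :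
      prob (partners M a ×ˢ containing M') (fun p => R (switch p.1 y p.2)) =
        prob (containing M) R :=
    hM' ▸ (prob_containing_eq_prob_switch ha hy hay R).symm
  rw [← prob_switch Q, ← prob_snd Q]
  refine (abs_prob_sub_prob_le fun p hp hgood => ?_).trans
    ((prob_or_le (P := fun p => ∃ C ∈ overlapping 𝓒 E, C ⊆ edges (switch p.1 y p.2))).trans
      ((add_le_add_right (prob_or_le (P := fun p => ∃ C ∈ overlapping 𝓒 E, C ⊆ edges p.2)
        (Q := fun p => ∃ C ∈ 𝓒, p.1 ∈ endpoints C ∧ C ⊆ edges p.2)) _).trans ?_))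
  · rw [mem_product, mem_partners, mem_containing, ← hM', insert_subset_iff, mk_mem_edges] at hp
    obtain ⟨hbefore, hafter, hhit⟩ := by simpa only [not_or] using hgood
    exact apply_switch_iff (hME (hM' ▸ mem_insert_self _ _)) hp.2.1 hp.1.1 hbefore hafter hhit hQ
  · have hbefore := prob_exists_subset_edges_le (hover M hM)
    have hafter := prob_exists_subset_edges_le (hover M' hME)
    have hhit := prob_exists_mem_endpoints_le (hhit M' hME) hD₀ hDK
    rw [prob_switch fun ω => ∃ C ∈ overlapping 𝓒 E, C ⊆ edges ω,
      prob_snd fun ω => ∃ C ∈ overlapping 𝓒 E, C ⊆ edges ω]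
    linarith

theorem abs_prob_univ_sub_prob_containing_le (hE : IsPartialMatching E)
    (hD₀ : 0 < D) (hD : D + 2 * #E ≤ Fintype.card α + 1)
    (hover : ∀ M ⊆ E, ∑ C ∈ overlapping 𝓒 E, prob (containing M) (C ⊆ edges ·) ≤ ε)
    (hhit : ∀ M ⊆ E, ∑ C ∈ 𝓒, 2 * #C * prob (containing M) (C ⊆ edges ·) ≤ ε * D)
    (hQ : ∀ ω ω', (∀ C ∈ 𝓒, ¬ C ⊆ E → (C ⊆ edges ω ↔ C ⊆ edges ω')) → (Q ω ↔ Q ω')) :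
    |prob univ Q - prob (containing E) Q| ≤ #E * (3 * ε) := by
  suffices ∀ M ⊆ E, |prob univ Q - prob (containing M) Q| ≤ #M * (3 * ε) from
    this E Subset.rfl
  intro M
  induction M using Finset.induction_on with
  | empty => simp
  | insert e M he ih =>
    intro hME
    induction e with | h a y =>
    have hMsub : M ⊆ E := (subset_insert _ _).trans hME
    have haE : s(a, y) ∈ E := hME (mem_insert_self _ _)
    have hcard := card_le_card hME
    rw [card_insert_of_notMem he] at hcard ⊢
    have hstep := abs_prob_containing_sub_prob_containing_insert_le hME
      (hE.notMem_endpoints hMsub haE he (Sym2.mem_mk_left a y))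
      (hE.notMem_endpoints hMsub haE he (Sym2.mem_mk_right a y))
      (hE.1 _ haE) hD₀ (by omega) hover hhit hQ
    calc _ ≤ |prob univ Q - prob (containing M) Q|
          + |prob (containing M) Q - prob (containing (insert s(a, y) M)) Q| := abs_sub_le _ _ _
      _ ≤ #M * (3 * ε) + 3 * ε := add_le_add (ih hMsub) hstep
      _ = _ := by push_cast; ring

end Conditioning

section Circuits

open PerfectMatching

variable {α V : Type*} {b : α → V} {k n : ℕ} {u : ZMod k → α × α} {t : ZMod n → α × α}

/-- A rooted directed traversal of a `k`-circuit: it visits `k` distinct vertices, entering the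
`i`-th one through the half-edge `(u i).2` and leaving it through `(u i).1`. -/
def IsTraversal (b : α → V) (u : ZMod k → α × α) : Prop :=
  Function.Injective (fun i => b (u i).1) ∧ ∀ i, (u i).1 ≠ (u i).2 ∧ b (u i).1 = b (u i).2

/-- The edge along which a traversal moves from its `i`-th vertex to the next one. -/
def traversalEdge (u : ZMod k → α × α) (i : ZMod k) : Sym2 α :=
  s((u i).1, (u (i + 1)).2)

namespace IsTraversal

lemma fst_inj (hu : IsTraversal b u) {i j : ZMod k} (h : (u i).1 = (u j).1) : i = j :=
  hu.1 (congrArg b h)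

lemma snd_inj (hu : IsTraversal b u) {i j : ZMod k} (h : (u i).2 = (u j).2) : i = j :=
  hu.1 (by simp only [(hu.2 _).2, h])

lemma fst_ne_snd (hu : IsTraversal b u) (i j : ZMod k) : (u i).1 ≠ (u j).2 := fun h => by
  obtain rfl : i = j := hu.1 (by simp only [h, (hu.2 j).2])
  exact (hu.2 i).1 h

lemma eq_of_mem_traversalEdge (hu : IsTraversal b u) {i j : ZMod k} {a : α}
    (hi : a ∈ traversalEdge u i) (hj : a ∈ traversalEdge u j) : i = j := by
  rw [traversalEdge, Sym2.mem_iff] at hi hj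
  rcases hi with rfl | rfl <;> rcases hj with h | h
  exacts [hu.fst_inj h, absurd h (hu.fst_ne_snd _ _), absurd h.symm (hu.fst_ne_snd _ _),
    add_right_cancel (hu.snd_inj h)]

lemma traversalEdge_injective (hu : IsTraversal b u) : Function.Injective (traversalEdge u) :=
  fun _ _ h => hu.eq_of_mem_traversalEdge (Sym2.mem_mk_left _ _) (h ▸ Sym2.mem_mk_left _ _)

end IsTraversal

/-- The action of the dihedral group on traversals by changing the root and the direction. -/
def reroot : DihedralGroup k → (ZMod k → α × α) → ZMod k → α × α
  | .r j, u => fun i => u (i + j)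
  | .sr j, u => fun i => (u (j - i)).swap

protected lemma IsTraversal.reroot (hu : IsTraversal b u) (g : DihedralGroup k) :
    IsTraversal b (reroot g u) := by
  cases g with
  | r j => exact ⟨fun i i' h => add_right_cancel (hu.1 h), fun i => hu.2 _⟩
  | sr j =>
    refine ⟨fun i i' h => ?_, fun i => ⟨(hu.2 _).1.symm, (hu.2 _).2.symm⟩⟩
    have h' : b (u (j - i)).2 = b (u (j - i')).2 := h
    rw [← (hu.2 _).2, ← (hu.2 _).2] at h'
    exact sub_right_injective (hu.1 h')

lemma IsTraversal.reroot_injective (hu : IsTraversal b u) :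
    Function.Injective fun g => reroot g u := by
  intro g g' h
  have h0 := congrFun h 0
  cases g with
  | r j =>
    cases g' with
    | r j' =>
      have hj : u (0 + j) = u (0 + j') := h0
      rw [add_left_cancel (hu.fst_inj (congrArg Prod.fst hj))]
    | sr j' => exact absurd (congrArg Prod.fst h0) (hu.fst_ne_snd _ _)
  | sr j =>
    cases g' with
    | r j' => exact absurd (congrArg Prod.fst h0).symm (hu.fst_ne_snd _ _)
    | sr j' => rw [sub_left_injective (hu.snd_inj (congrArg Prod.fst h0))]

variable [NeZero k] [NeZero n]

/-- The set of edges of a traversal. -/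
noncomputable def traversalEdges (u : ZMod k → α × α) : Finset (Sym2 α) :=
  univ.image (traversalEdge u)

lemma traversalEdge_mem (u : ZMod k → α × α) (i : ZMod k) : traversalEdge u i ∈ traversalEdges u :=
  mem_image_of_mem _ (mem_univ i)

lemma fst_mem_endpoints (u : ZMod k → α × α) (i : ZMod k) :
    (u i).1 ∈ endpoints (traversalEdges u) :=
  left_mem_endpoints (traversalEdge_mem u i)

lemma snd_mem_endpoints (u : ZMod k → α × α) (i : ZMod k) :
    (u i).2 ∈ endpoints (traversalEdges u) :=
  right_mem_endpoints (a := (u (i - 1)).1)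
    (by simpa [traversalEdge] using traversalEdge_mem u (i - 1))

lemma mem_endpoints_traversalEdges {a : α} :
    a ∈ endpoints (traversalEdges u) ↔ ∃ i, a = (u i).1 ∨ a = (u i).2 := by
  constructor
  · simp only [mem_endpoints, traversalEdges, mem_image, mem_univ, true_and]
    rintro ⟨_, ⟨i, rfl⟩, ha⟩
    rcases Sym2.mem_iff.1 ha with rfl | rfl
    exacts [⟨i, Or.inl rfl⟩, ⟨i + 1, Or.inr rfl⟩]
  · rintro ⟨i, rfl | rfl⟩
    exacts [fst_mem_endpoints u i, snd_mem_endpoints u i]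

namespace IsTraversal

lemma isPartialMatching (hu : IsTraversal b u) : IsPartialMatching (traversalEdges u) := by
  simp only [IsPartialMatching, traversalEdges, mem_image, mem_univ, true_and,
    forall_exists_index, forall_apply_eq_imp_iff]
  exact ⟨fun i => hu.fst_ne_snd _ _, fun i j a hi hj => hu.eq_of_mem_traversalEdge hi hj ▸ rfl⟩

lemma card_traversalEdges (hu : IsTraversal b u) : #(traversalEdges u) = k := by
  rw [traversalEdges, card_image_of_injective _ hu.traversalEdge_injective, card_univ, ZMod.card]

lemma eq_fst_or_eq_snd (ht : IsTraversal b t) {a : α} {j : ZMod n}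
    (ha : a ∈ endpoints (traversalEdges t)) (hb : b a = b (t j).1) :
    a = (t j).1 ∨ a = (t j).2 := by
  obtain ⟨i, rfl | rfl⟩ := mem_endpoints_traversalEdges.1 ha
  · exact Or.inl (congrArg (fun i => (t i).1) (ht.1 hb))
  · exact Or.inr (congrArg (fun i => (t i).2) (ht.1 ((ht.2 i).2.trans hb)))

end IsTraversal

lemma traversalEdges_reroot (g : DihedralGroup k) (u : ZMod k → α × α) :
    traversalEdges (reroot g u) = traversalEdges u := by
  cases g with
  | r j =>
    have (i : ZMod k) : traversalEdge (reroot (.r j) u) i = traversalEdge u (i + j) := by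
      simp only [traversalEdge, reroot, add_right_comm]
    ext e
    simp only [traversalEdges, mem_image, mem_univ, true_and, this]
    exact (Equiv.addRight j).exists_congr_left.trans (by simp)
  | sr j =>
    have (i : ZMod k) : traversalEdge (reroot (.sr j) u) i = traversalEdge u (j - 1 - i) := by
      simp only [traversalEdge, reroot, Prod.fst_swap, Prod.snd_swap]
      rw [Sym2.eq_swap, sub_add_eq_sub_sub_swap, sub_right_comm, sub_add_cancel]
    ext e
    simp only [traversalEdges, mem_image, mem_univ, true_and, this]
    exact (Equiv.subLeft (j - 1)).exists_congr_left.trans (by simp)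

lemma IsTraversal.eq_of_fst_eq (hu : IsTraversal b u) (ht : IsTraversal b t)
    (h : traversalEdges u ⊆ traversalEdges t) (h0 : (u 0).1 = (t 0).1) (m : ℕ) : u m = t m := by
  have hmem {a : α} (ha : a ∈ endpoints (traversalEdges u)) : a ∈ endpoints (traversalEdges t) :=
    endpoints_mono h ha
  induction m with
  | zero =>
    have hb : b (u 0).2 = b (t 0).1 := by rw [← (hu.2 0).2, h0]
    have hsnd : (u 0).2 = (t 0).2 :=
      (ht.eq_fst_or_eq_snd (hmem (snd_mem_endpoints u 0)) hb).resolve_left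
        (h0 ▸ (hu.2 0).1.symm)
    simpa using Prod.ext h0 hsnd
  | succ m ih =>
    push_cast
    obtain ⟨j, -, hj⟩ := mem_image.1 (h (traversalEdge_mem u m))
    obtain rfl : j = m := ht.eq_of_mem_traversalEdge (a := (t m).1)
      (hj ▸ ih ▸ Sym2.mem_mk_left _ _) (Sym2.mem_mk_left _ _)
    have hsnd : (u (m + 1)).2 = (t (m + 1)).2 := by
      rw [traversalEdge, traversalEdge, ih] at hj
      exact (Sym2.congr_right.1 hj).symm
    have hb : b (u (m + 1)).1 = b (t (m + 1)).1 := by rw [(hu.2 _).2, hsnd, (ht.2 _).2]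
    have hfst : (u (m + 1)).1 = (t (m + 1)).1 :=
      (ht.eq_fst_or_eq_snd (hmem (fst_mem_endpoints u _)) hb).resolve_right
        (hsnd ▸ (hu.2 _).1)
    exact Prod.ext hfst hsnd

lemma exists_reroot_fst_eq (h : traversalEdges u ⊆ traversalEdges t) :
    ∃ g, (u 0).1 = (reroot g t 0).1 := by
  obtain ⟨j, hj | hj⟩ :=
    mem_endpoints_traversalEdges.1 (endpoints_mono h (fst_mem_endpoints u 0))
  exacts [⟨.r j, by simpa [reroot] using hj⟩,
    ⟨.sr j, by simpa [reroot] using hj⟩]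

lemma IsTraversal.length_eq (hu : IsTraversal b u) (ht : IsTraversal b t)
    (h : traversalEdges u ⊆ traversalEdges t) : k = n := by
  obtain ⟨g, hg⟩ := exists_reroot_fst_eq h
  replace ht := ht.reroot g
  rw [← traversalEdges_reroot g] at h
  have heq := hu.eq_of_fst_eq ht h hg
  refine Nat.dvd_antisymm ?_ ?_
  · rw [← ZMod.natCast_eq_zero_iff]
    exact hu.fst_inj (by rw [heq, ZMod.natCast_self, hg])
  · rw [← ZMod.natCast_eq_zero_iff]
    exact ht.fst_inj (by rw [← heq, ZMod.natCast_self, hg])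

lemma IsTraversal.exists_eq_reroot {t : ZMod k → α × α} (hu : IsTraversal b u)
    (ht : IsTraversal b t) (h : traversalEdges u ⊆ traversalEdges t) :
    ∃ g, u = reroot g t := by
  obtain ⟨g, hg⟩ := exists_reroot_fst_eq h
  rw [← traversalEdges_reroot g t] at h
  refine ⟨g, funext fun i => ?_⟩
  simpa using hu.eq_of_fst_eq (ht.reroot g) h hg i.val

variable [Fintype α]

variable (b k) in
/-- The rooted directed traversals of length `k`. -/
noncomputable def traversals : Finset (ZMod k → α × α) :=
  {u | IsTraversal b u}

variable (b k) in
/-- The possible circuits of length `k`, as sets of edges. -/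
noncomputable def circuits : Finset (Finset (Sym2 α)) :=
  (traversals b k).image traversalEdges

variable (b k) in
/-- The number of circuits of length `k` of the multigraph defined by `ω`. -/
noncomputable def circuitCount (ω : PerfectMatching α) : ℕ :=
  #{C ∈ circuits b k | C ⊆ ω.edges}

lemma mem_traversals : u ∈ traversals b k ↔ IsTraversal b u := by simp [traversals]

lemma mem_circuits {C : Finset (Sym2 α)} :
    C ∈ circuits b k ↔ ∃ u : ZMod k → α × α, IsTraversal b u ∧ traversalEdges u = C := by
  simp [circuits, mem_traversals]

lemma isPartialMatching_of_mem_circuits {C : Finset (Sym2 α)} (hC : C ∈ circuits b k) :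
    IsPartialMatching C := by
  obtain ⟨u, hu, rfl⟩ := mem_circuits.1 hC
  exact hu.isPartialMatching

lemma card_of_mem_circuits {C : Finset (Sym2 α)} (hC : C ∈ circuits b k) : #C = k := by
  obtain ⟨u, hu, rfl⟩ := mem_circuits.1 hC
  exact hu.card_traversalEdges

lemma eq_of_subset_of_mem_circuits {C C' : Finset (Sym2 α)} (hC : C ∈ circuits b k)
    (hC' : C' ∈ circuits b n) (h : C ⊆ C') : C = C' := by
  obtain ⟨u, hu, rfl⟩ := mem_circuits.1 hC
  obtain ⟨t, ht, rfl⟩ := mem_circuits.1 hC'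
  refine eq_of_subset_of_card_le h ?_
  rw [hu.card_traversalEdges, ht.card_traversalEdges, hu.length_eq ht h]

lemma card_traversals_with_edges {t : ZMod k → α × α} (ht : IsTraversal b t) :
    #{u ∈ traversals b k | traversalEdges u = traversalEdges t} = 2 * k := by
  rw [← DihedralGroup.card (n := k), ← card_univ, ← card_image_of_injective _ ht.reroot_injective]
  congr 1
  ext u
  simp only [mem_filter, mem_traversals, mem_image, mem_univ, true_and]
  constructor
  · rintro ⟨hu, h⟩
    obtain ⟨g, rfl⟩ := hu.exists_eq_reroot ht h.subset
    exact ⟨g, rfl⟩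
  · rintro ⟨g, rfl⟩
    exact ⟨ht.reroot g, traversalEdges_reroot g t⟩

lemma sum_traversals {R : Type*} [AddCommMonoid R] (w : Finset (Sym2 α) → R) :
    ∑ u ∈ traversals b k, w (traversalEdges u) = (2 * k) • ∑ C ∈ circuits b k, w C := by
  rw [sum_comp, ← circuits, smul_sum]
  refine sum_congr rfl fun C hC => ?_
  obtain ⟨t, ht, rfl⟩ := mem_circuits.1 hC
  rw [card_traversals_with_edges ht]

lemma card_traversals_subset_edges (ω : PerfectMatching α) :
    #{u ∈ traversals b k | traversalEdges u ⊆ ω.edges} = 2 * k * circuitCount b k ω := by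
  rw [circuitCount, card_filter, card_filter, ← smul_eq_mul]
  exact sum_traversals fun C => if C ⊆ ω.edges then 1 else 0

lemma card_traversals : #(traversals b k) = 2 * k * #(circuits b k) := by
  rw [card_eq_sum_ones, card_eq_sum_ones, ← smul_eq_mul]
  exact sum_traversals fun _ => 1

end Circuits

section Moments

open PerfectMatching

variable {α V : Type*} {b : α → V} {k d : ℕ} {u : ZMod k → α × α} {M E : Finset (Sym2 α)}

lemma fst_mem_image_endpoints {i : ZMod k} (h : traversalEdge u i ∈ E) :
    b (u i).1 ∈ (endpoints E).image b :=
  mem_image_of_mem b (left_mem_endpoints h)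

lemma IsTraversal.next_mem_image_endpoints (hu : IsTraversal b u) {i : ZMod k}
    (h : traversalEdge u i ∈ E) : b (u (i + 1)).1 ∈ (endpoints E).image b :=
  (hu.2 _).2 ▸ mem_image_of_mem b (right_mem_endpoints h)

variable [NeZero k]

/-- The number of vertices of a traversal that lie outside `B`. -/
noncomputable def escapes (b : α → V) (B : Finset V) (u : ZMod k → α × α) : ℕ :=
  #{i | b (u i).1 ∉ B}

lemma IsTraversal.escapes_le (hu : IsTraversal b u) (hM : M ⊆ E) :
    escapes b ((endpoints E).image b) u ≤ #(traversalEdges u \ M) := by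
  refine card_le_card_of_injOn (traversalEdge u) (fun i hi => ?_) hu.traversalEdge_injective.injOn
  exact mem_sdiff.2 ⟨traversalEdge_mem u i,
    fun h => (mem_filter.1 hi).2 (fst_mem_image_endpoints (hM h))⟩

lemma IsTraversal.exists_exit (hu : IsTraversal b u) (hE : ¬ traversalEdges u ⊆ E)
    (hover : ¬ Disjoint (endpoints (traversalEdges u)) (endpoints E)) :
    ∃ i, b (u i).1 ∈ (endpoints E).image b ∧ traversalEdge u i ∉ E := by
  by_contra! hstay
  obtain ⟨a, hau, haE⟩ := not_disjoint_iff.1 hover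
  obtain ⟨i, hi⟩ : ∃ i, b (u i).1 ∈ (endpoints E).image b := by
    obtain ⟨i, rfl | rfl⟩ := mem_endpoints_traversalEdges.1 hau
    exacts [⟨i, mem_image_of_mem b haE⟩, ⟨i, (hu.2 i).2 ▸ mem_image_of_mem b haE⟩]
  have hall (m : ℕ) : b (u (i + m)).1 ∈ (endpoints E).image b := by
    induction m with
    | zero => simpa using hi
    | succ m ih =>
      rw [Nat.cast_succ, ← add_assoc]
      exact hu.next_mem_image_endpoints (hstay _ ih)
  refine hE (image_subset_iff.2 fun j _ => hstay j ?_)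
  simpa using hall (j - i).val

lemma IsTraversal.escapes_lt (hu : IsTraversal b u) (hM : M ⊆ E) (hE : ¬ traversalEdges u ⊆ E)
    (hover : ¬ Disjoint (endpoints (traversalEdges u)) (endpoints E)) :
    escapes b ((endpoints E).image b) u < #(traversalEdges u \ M) := by
  obtain ⟨i, hiB, hiE⟩ := hu.exists_exit hE hover
  rw [escapes, ← Nat.add_one_le_iff, ← card_insert_of_notMem (a := i) (by simpa using hiB)]
  refine card_le_card_of_injOn (traversalEdge u) (fun j hj => ?_) hu.traversalEdge_injective.injOn
  refine mem_sdiff.2 ⟨traversalEdge_mem u j, fun h => ?_⟩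
  rcases mem_insert.1 (mem_coe.1 hj) with rfl | hj
  · exact hiE (hM h)
  · exact (mem_filter.1 hj).2 (fst_mem_image_endpoints (hM h))

variable [Fintype α]

/-- The half-edges attached to the vertex `v`. -/
noncomputable def halfEdgesAt (b : α → V) (v : V) : Finset α :=
  {a | b a = v}

lemma mem_halfEdgesAt {v : V} {a : α} : a ∈ halfEdgesAt b v ↔ b a = v := by simp [halfEdgesAt]

variable [Fintype V]

lemma sum_weight_le (hb : ∀ v, #(halfEdgesAt b v) ≤ d) (B : Finset V) :
    ∑ p : α × α with b p.1 = b p.2, (if b p.1 ∈ B then 1 else (1 / Fintype.card V : ℝ)) ≤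
      d ^ 2 * (#B + 1) := by
  have hfiber (v : V) : ({p ∈ {p : α × α | b p.1 = b p.2} | b p.1 = v} : Finset (α × α)) =
      halfEdgesAt b v ×ˢ halfEdgesAt b v := by
    ext p
    simp only [mem_filter, mem_univ, true_and, mem_product, mem_halfEdgesAt]
    exact ⟨fun h => ⟨h.2, h.1 ▸ h.2⟩, fun h => ⟨h.1.trans h.2.symm, h.1⟩⟩
  have hcard (v : V) : (#(halfEdgesAt b v ×ˢ halfEdgesAt b v) : ℝ) ≤ d ^ 2 := by
    rw [card_product, ← sq]
    exact_mod_cast Nat.pow_le_pow_left (hb v) 2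
  calc _ = ∑ v : V, ∑ p ∈ halfEdgesAt b v ×ˢ halfEdgesAt b v,
          (if v ∈ B then 1 else (1 / Fintype.card V : ℝ)) := by
        rw [← sum_fiberwise _ fun p => b p.1]
        refine sum_congr rfl fun v _ => ?_
        rw [hfiber]
        refine sum_congr rfl fun p hp => ?_
        rw [mem_halfEdgesAt.1 (mem_product.1 hp).1]
    _ ≤ ∑ v : V, d ^ 2 * (if v ∈ B then 1 else (1 / Fintype.card V : ℝ)) := by
        simp only [sum_const, nsmul_eq_mul]
        gcongr with v
        exact hcard v
    _ ≤ ∑ v : V, d ^ 2 * ((if v ∈ B then 1 else 0) + (1 / Fintype.card V : ℝ)) := by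
        gcongr with v
        split_ifs <;> simp
    _ = d ^ 2 * (#B + Fintype.card V * (1 / Fintype.card V : ℝ)) := by
        rw [← mul_sum, sum_add_distrib]
        simp
    _ ≤ d ^ 2 * (#B + 1) := by
        gcongr
        rw [mul_one_div]
        exact div_self_le_one _

lemma sum_traversals_pow_escapes_le (hb : ∀ v, #(halfEdgesAt b v) ≤ d) (B : Finset V) :
    ∑ u ∈ traversals b k, (1 / Fintype.card V : ℝ) ^ escapes b B u ≤
      (d ^ 2 * (#B + 1)) ^ k := by
  set w : α × α → ℝ := fun p => if b p.1 ∈ B then 1 else 1 / Fintype.card V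
  have hw (p) : 0 ≤ w p := by simp only [w]; split_ifs <;> positivity
  calc ∑ u ∈ traversals b k, (1 / Fintype.card V : ℝ) ^ escapes b B u
      = ∑ u ∈ traversals b k, ∏ i, w (u i) := by
        refine sum_congr rfl fun u _ => ?_
        simp only [w, prod_ite, prod_const_one, one_mul, prod_const, escapes]
    _ ≤ ∑ u ∈ Fintype.piFinset fun _ : ZMod k => {p : α × α | b p.1 = b p.2}, ∏ i, w (u i) := by
        refine sum_le_sum_of_subset_of_nonneg (fun u hu => ?_) fun u _ _ =>
          prod_nonneg fun i _ => hw _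
        simpa [Fintype.mem_piFinset] using fun i => ((mem_traversals.1 hu).2 i).2
    _ = (∑ p : α × α with b p.1 = b p.2, w p) ^ k := by
        rw [← prod_univ_sum, prod_const, card_univ, ZMod.card]
    _ ≤ (d ^ 2 * (#B + 1)) ^ k :=
        pow_le_pow_left₀ (sum_nonneg fun p _ => hw p) (sum_weight_le hb B) k

lemma sum_circuits_le (hb : ∀ v, #(halfEdgesAt b v) ≤ d) (E : Finset (Sym2 α))
    {w : Finset (Sym2 α) → ℝ} {c : ℝ} (hc : 0 ≤ c)
    (hw : ∀ u ∈ traversals b k, w (traversalEdges u) ≤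
      c * (1 / Fintype.card V : ℝ) ^ escapes b ((endpoints E).image b) u) :
    ∑ C ∈ circuits b k, 2 * k * w C ≤ c * (d ^ 2 * (2 * #E + 1)) ^ k := by
  have hB : #((endpoints E).image b) ≤ 2 * #E := card_image_le.trans (card_endpoints_le E)
  calc ∑ C ∈ circuits b k, 2 * k * w C = ∑ u ∈ traversals b k, w (traversalEdges u) := by
        rw [sum_traversals, nsmul_eq_mul, ← mul_sum]
        push_cast
        rfl
    _ ≤ c * ∑ u ∈ traversals b k,
          (1 / Fintype.card V : ℝ) ^ escapes b ((endpoints E).image b) u := by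
        rw [mul_sum]
        exact sum_le_sum hw
    _ ≤ c * (d ^ 2 * (#((endpoints E).image b) + 1)) ^ k := by
        gcongr
        exact sum_traversals_pow_escapes_le hb _
    _ ≤ c * (d ^ 2 * (2 * #E + 1)) ^ k := by
        gcongr
        exact_mod_cast hB

section

variable (hb : ∀ v, #(halfEdgesAt b v) ≤ d) (hV : 0 < Fintype.card V)
  (hα : Fintype.card V + 2 * (#E + k) ≤ Fintype.card α) (hM : M ⊆ E)

include hV hα hM

lemma IsTraversal.prob_containing_le (hu : IsTraversal b u) :
    prob (containing M) (traversalEdges u ⊆ edges ·) ≤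
      (1 / Fintype.card V : ℝ) ^ #(traversalEdges u \ M) := by
  refine prob_containing_subset_edges_le hV ?_
  have := card_union_le M (traversalEdges u)
  have := card_le_card hM
  have := hu.card_traversalEdges
  omega

include hb

lemma sum_circuits_prob_containing_le :
    ∑ C ∈ circuits b k, 2 * #C * prob (containing M) (C ⊆ edges ·) ≤
      (d ^ 2 * (2 * #E + 1)) ^ k := by
  rw [← one_mul ((_ : ℝ) ^ k)]
  refine (sum_congr rfl fun C hC => by rw [card_of_mem_circuits hC]).trans_le
    (sum_circuits_le hb E zero_le_one fun u hu => ?_)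
  rw [mem_traversals] at hu
  rw [one_mul]
  exact (hu.prob_containing_le hV hα hM).trans
    (pow_le_pow_of_le_one (by positivity) (by simpa using Nat.cast_inv_le_one _) (hu.escapes_le hM))

lemma sum_overlapping_prob_containing_le :
    ∑ C ∈ overlapping (circuits b k) E, prob (containing M) (C ⊆ edges ·) ≤
      (d ^ 2 * (2 * #E + 1)) ^ k / Fintype.card V := by
  set w : Finset (Sym2 α) → ℝ := fun C =>
    if ¬ C ⊆ E ∧ ¬ Disjoint (endpoints C) (endpoints E) then prob (containing M) (C ⊆ edges ·)
    else 0
  have hw₀ (C) : 0 ≤ w C := by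
    simp only [w]
    split_ifs
    exacts [prob_nonneg, le_rfl]
  have hk : (1 : ℝ) ≤ 2 * k := by
    have : (1 : ℝ) ≤ k := mod_cast NeZero.one_le
    linarith
  calc ∑ C ∈ overlapping (circuits b k) E, prob (containing M) (C ⊆ edges ·)
      = ∑ C ∈ circuits b k, w C := by rw [overlapping, sum_filter]
    _ ≤ ∑ C ∈ circuits b k, 2 * k * w C :=
        sum_le_sum fun C _ => le_mul_of_one_le_left (hw₀ C) hk
    _ ≤ 1 / Fintype.card V * (d ^ 2 * (2 * #E + 1)) ^ k := by
        refine sum_circuits_le hb E (by positivity) fun u hu => ?_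
        rw [mem_traversals] at hu
        simp only [w]
        split_ifs with h
        · rw [← pow_succ']
          exact (hu.prob_containing_le hV hα hM).trans (pow_le_pow_of_le_one (by positivity)
            (by simpa using Nat.cast_inv_le_one _) (hu.escapes_lt hM h.1 h.2))
        · positivity
    _ = _ := by ring

end

end Moments

section Mean

open PerfectMatching Filter Topology

variable {α V : Type*} [Fintype α] [Fintype V] {b : α → V} {k d : ℕ}

lemma card_eq_mul_card (hb : ∀ v, #(halfEdgesAt b v) = d) :
    Fintype.card α = d * Fintype.card V := by
  rw [← card_univ, card_eq_sum_card_fiberwise (f := b) (t := univ) (by simp)]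
  simp only [halfEdgesAt] at hb
  simp [hb, mul_comm]

lemma card_injective [NeZero k] :
    #{c : ZMod k → V | Function.Injective c} = (Fintype.card V).descFactorial k := by
  rw [← Fintype.card_subtype, Fintype.card_congr (Equiv.subtypeInjectiveEquivEmbedding _ _),
    Fintype.card_embedding_eq, ZMod.card]

lemma card_traversals_eq [NeZero k] (hb : ∀ v, #(halfEdgesAt b v) = d) :
    #(traversals b k) = (Fintype.card V).descFactorial k * (d * (d - 1)) ^ k := by
  have hmaps : Set.MapsTo (fun (u : ZMod k → α × α) i => b (u i).1) (traversals b k)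
      ({c : ZMod k → V | Function.Injective c} : Finset _) := fun u hu =>
    mem_coe.2 <| mem_filter.2 ⟨mem_univ _, (mem_traversals.1 (mem_coe.1 hu)).1⟩
  rw [card_eq_sum_card_fiberwise hmaps, ← card_injective, ← smul_eq_mul, ← sum_const]
  refine sum_congr rfl fun c hc => ?_
  have hfiber : ({u ∈ traversals b k | (fun i => b (u i).1) = c} : Finset _) =
      Fintype.piFinset fun i => (halfEdgesAt b (c i)).offDiag := by
    ext u
    simp only [mem_filter, mem_traversals, Fintype.mem_piFinset, mem_offDiag, mem_halfEdgesAt]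
    constructor
    · rintro ⟨hu, rfl⟩ i
      exact ⟨rfl, (hu.2 i).2.symm, (hu.2 i).1⟩
    · intro h
      obtain rfl : (fun i => b (u i).1) = c := funext fun i => (h i).1
      exact ⟨⟨(mem_filter.1 hc).2, fun i => ⟨(h i).2.2, (h i).2.1.symm⟩⟩, rfl⟩
  simp [hfiber, Fintype.card_piFinset, offDiag_card, hb, Nat.mul_sub, ZMod.card]

lemma card_circuits_eq [NeZero k] (hd : 0 < d) (hb : ∀ v, #(halfEdgesAt b v) = d) :
    (#(circuits b k) : ℝ) =
      (d * (d - 1)) ^ k / (2 * k) * (Fintype.card V).descFactorial k := by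
  have h := card_traversals_eq (k := k) hb
  rw [card_traversals] at h
  rw [div_mul_eq_mul_div, eq_div_iff (by simp [NeZero.ne k]), mul_comm, mul_comm (_ ^ k),
    ← Nat.cast_pred hd]
  exact_mod_cast h

variable (b k) in
/-- The expected number of circuits of length `k` in a uniform perfect matching. -/
noncomputable def meanCircuitCount [NeZero k] : ℝ :=
  ∑ C ∈ circuits b k, prob univ (C ⊆ edges ·)

omit [Fintype V] in
lemma card_circuits_mul_pow_le [NeZero k] [Nonempty (PerfectMatching α)] :
    #(circuits b k) * (1 / Fintype.card α : ℝ) ^ k ≤ meanCircuitCount b k := by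
  rw [← nsmul_eq_mul]
  refine card_nsmul_le_sum _ _ _ fun C hC => ?_
  simpa only [card_of_mem_circuits hC] using (isPartialMatching_of_mem_circuits hC).pow_le_prob

omit [Fintype V] in
lemma meanCircuitCount_le [NeZero k] {D : ℕ} (hD₀ : 0 < D) (hD : D + 2 * k ≤ Fintype.card α) :
    meanCircuitCount b k ≤ #(circuits b k) * (1 / D : ℝ) ^ k := by
  rw [← nsmul_eq_mul]
  refine sum_le_card_nsmul _ _ _ fun C hC => ?_
  have hC' := card_of_mem_circuits hC
  simpa [hC'] using prob_containing_subset_edges_le (M := ∅) (C := C) hD₀ (by simp; omega)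

lemma tendsto_natCast_div_mul_sub (hd : d ≠ 0) (c : ℝ) :
    Tendsto (fun N : ℕ => (N : ℝ) / (d * N - c)) atTop (𝓝 (1 / d)) := by
  have h : Tendsto (fun N : ℕ => 1 / ((d : ℝ) - c / N)) atTop (𝓝 (1 / (d - 0))) :=
    tendsto_const_nhds.div (tendsto_const_nhds.sub (tendsto_const_div_atTop_nhds_zero_nat c))
      (by simpa using hd)
  rw [sub_zero] at h
  refine h.congr' ?_
  filter_upwards [eventually_ne_atTop 0] with N hN
  field_simp

lemma tendsto_descFactorial_mul_pow (hd : d ≠ 0) (k : ℕ) (c : ℝ) :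
    Tendsto (fun N : ℕ => (d * (d - 1)) ^ k / (2 * k) * (N.descFactorial k : ℝ)
      * (1 / (d * N - c)) ^ k) atTop (𝓝 ((d - 1) ^ k / (2 * k))) := by
  have hfactorial : Tendsto (fun N : ℕ => (N.descFactorial k : ℝ) / N ^ k) atTop (𝓝 1) :=
    (Asymptotics.isEquivalent_iff_tendsto_one <| by
      filter_upwards [eventually_ne_atTop 0] with N hN using by positivity).1
      (isEquivalent_descFactorial k)
  have h := (hfactorial.mul ((tendsto_natCast_div_mul_sub hd c).pow k)).const_mul
    (((d : ℝ) * (d - 1)) ^ k / (2 * k))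
  have hlim : ((d : ℝ) * (d - 1)) ^ k / (2 * k) * (1 * (1 / d) ^ k) = (d - 1) ^ k / (2 * k) := by
    have : (d : ℝ) ≠ 0 := mod_cast hd
    rw [one_mul, div_mul_eq_mul_div, ← mul_pow]
    congr 2
    field_simp
  rw [hlim] at h
  refine h.congr' ?_
  filter_upwards [eventually_ne_atTop 0] with N hN
  have hN' : (N : ℝ) ^ k ≠ 0 := by positivity
  rw [div_eq_mul_one_div (N : ℝ) (_ - _), mul_pow (N : ℝ), ← mul_assoc (_ / (N : ℝ) ^ k),
    div_mul_cancel₀ _ hN', ← mul_assoc]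

theorem tendsto_meanCircuitCount [NeZero k] {P : Type*} {l : Filter P} {α V : P → Type*}
    [∀ n, Fintype (α n)] [∀ n, Fintype (V n)] {b : ∀ n, α n → V n} (hd : 2 ≤ d)
    (hb : ∀ n v, #(halfEdgesAt (b n) v) = d)
    (hV : Tendsto (fun n => Fintype.card (V n)) l atTop)
    (hα : ∀ᶠ n in l, Even (Fintype.card (α n))) :
    Tendsto (fun n => meanCircuitCount (b n) k) l (𝓝 ((d - 1) ^ k / (2 * k))) := by
  have hd₀ : d ≠ 0 := by omega
  have hlower := (tendsto_descFactorial_mul_pow hd₀ k 0).comp hV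
  have hupper := (tendsto_descFactorial_mul_pow hd₀ k (2 * k)).comp hV
  refine tendsto_of_tendsto_of_tendsto_of_le_of_le' hlower hupper ?_ ?_
  · filter_upwards [hα] with n hn
    have := nonempty_of_even_card hn
    have h := card_circuits_mul_pow_le (b := b n) (k := k)
    rw [card_circuits_eq (by omega) (hb n), card_eq_mul_card (hb n)] at h
    simpa using h
  · filter_upwards [hV.eventually_gt_atTop (2 * k)] with n hn
    have hk : 2 * k < d * Fintype.card (V n) := hn.trans_le (Nat.le_mul_of_pos_left _ (by omega))
    have h := meanCircuitCount_le (b := b n) (k := k) (Nat.sub_pos_of_lt hk)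
      (by rw [card_eq_mul_card (hb n)]; omega)
    rw [card_circuits_eq (by omega) (hb n), Nat.cast_sub hk.le] at h
    simpa using h

end Mean

section Poisson

open Filter Topology

variable {ι P : Type*} [Fintype ι] {l : Filter P} {μ : ι → ℝ} {p : P → (ι → ℕ) → ℝ} {C : ℝ}

/-- The joint mass function of independent Poisson variables with means `μ i`, without its
normalising factor `exp (-∑ i, μ i)`. -/
noncomputable def poissonWeight (μ : ι → ℝ) (j : ι → ℕ) : ℝ :=
  ∏ i, μ i ^ j i / (j i).factorial

@[simp]
lemma poissonWeight_zero : poissonWeight μ 0 = 1 := by simp [poissonWeight]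

lemma poissonWeight_add_single (j : ι → ℕ) (k : ι) :
    (j k + 1) * poissonWeight μ (j + Pi.single k 1) = μ k * poissonWeight μ j := by
  unfold poissonWeight
  rw [← mul_prod_erase _ _ (mem_univ k), ← mul_prod_erase univ (fun i => _ / _) (mem_univ k),
    ← mul_assoc, ← mul_assoc]
  congr 1
  · simp only [Pi.add_apply, Pi.single_eq_same, Nat.factorial_succ, pow_succ]
    push_cast
    field_simp
  · exact prod_congr rfl fun i hi => by simp [Pi.single_eq_of_ne (ne_of_mem_erase hi)]

lemma tendsto_sum_poissonWeight (μ : ι → ℝ) :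
    Tendsto (fun K => ∑ j ∈ Fintype.piFinset fun _ => range K, poissonWeight μ j) atTop
      (𝓝 (Real.exp (∑ i, μ i))) := by
  have hprod (K : ℕ) : ∑ j ∈ Fintype.piFinset fun _ => range K, poissonWeight μ j =
      ∏ i, ∑ t ∈ range K, μ i ^ t / t.factorial := by
    simp only [prod_univ_sum, poissonWeight]
  simp only [hprod, Real.exp_sum]
  refine tendsto_finsetProd _ fun i _ => ?_
  rw [Real.exp_eq_exp_ℝ]
  exact (NormedSpace.expSeries_div_hasSum_exp (μ i)).tendsto_sum_nat

variable (hrec : ∀ j k,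
  Tendsto (fun n => ((j k : ℝ) + 1) * p n (j + Pi.single k 1) - μ k * p n j) l (𝓝 0))

include hrec

lemma tendsto_sub_poissonWeight_mul (j : ι → ℕ) :
    Tendsto (fun n => p n j - poissonWeight μ j * p n 0) l (𝓝 0) := by
  induction hs : ∑ i, j i generalizing j with
  | zero =>
    obtain rfl : j = 0 := funext fun i => by simpa using sum_eq_zero_iff.1 hs i (mem_univ i)
    simp [tendsto_const_nhds]
  | succ s ih =>
    obtain ⟨k, -, hk⟩ := exists_ne_zero_of_sum_ne_zero (hs.trans_ne s.succ_ne_zero)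
    obtain ⟨j, rfl⟩ : ∃ i, j = i + Pi.single k 1 :=
      ⟨j - Pi.single k 1, (tsub_add_cancel_of_le fun i => by
        rcases eq_or_ne i k with rfl | hi <;> simp_all [Nat.one_le_iff_ne_zero]).symm⟩
    have hj : ∑ i, j i = s := by simpa [sum_add_distrib] using hs
    have h := ((hrec j k).add ((ih j hj).const_mul (μ k))).div_const (j k + 1 : ℝ)
    rw [mul_zero, add_zero, zero_div] at h
    refine h.congr fun n => ?_
    rw [div_eq_iff (by positivity)]
    linear_combination p n 0 * poissonWeight_add_single (μ := μ) j k

lemma tendsto_zero_of_tight (h0 : ∀ n, p n 0 ∈ Set.Icc 0 1)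
    (hle : ∀ n K, ∑ j ∈ Fintype.piFinset fun _ => range K, p n j ≤ 1)
    (htight : ∀ K : ℕ, 0 < K →
      ∀ᶠ n in l, 1 - C / K ≤ ∑ j ∈ Fintype.piFinset fun _ => range K, p n j) :
    Tendsto (fun n => p n 0) l (𝓝 (Real.exp (-∑ i, μ i))) := by
  set W : ℕ → ℝ := fun K => ∑ j ∈ Fintype.piFinset fun _ : ι => range K, poissonWeight μ j
  have hdiff (K : ℕ) : Tendsto
      (fun n => (∑ j ∈ Fintype.piFinset fun _ : ι => range K, p n j) - W K * p n 0) l (𝓝 0) := by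
    simpa [W, sum_sub_distrib, sum_mul] using
      tendsto_finsetSum (Fintype.piFinset fun _ : ι => range K) fun j _ =>
        tendsto_sub_poissonWeight_mul hrec j
  suffices h : Tendsto (fun n => Real.exp (∑ i, μ i) * p n 0) l (𝓝 1) by
    simpa [← mul_assoc, ← Real.exp_add] using h.const_mul (Real.exp (-∑ i, μ i))
  rw [Metric.tendsto_nhds]
  intro ε hε
  obtain ⟨K, hKW, hKC, hK⟩ := ((Metric.tendsto_nhds.1 (tendsto_sum_poissonWeight μ) (ε / 3)
    (by positivity)).and (((tendsto_const_div_atTop_nhds_zero_nat C).eventually_lt_const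
      (show 0 < ε / 3 by positivity)).and (eventually_gt_atTop 0))).exists
  filter_upwards [htight K hK, Metric.tendsto_nhds.1 (hdiff K) (ε / 3) (by positivity)]
    with n hn hnK
  have hp : |(W K - Real.exp (∑ i, μ i)) * p n 0| < ε / 3 := by
    rw [abs_mul, abs_of_nonneg (h0 n).1]
    exact (mul_le_of_le_one_right (abs_nonneg _) (h0 n).2).trans_lt hKW
  have := hle n K
  rw [Real.dist_eq, abs_lt] at hnK ⊢
  rw [abs_lt] at hp
  constructor <;> linarith

theorem tendsto_poisson_of_tight (h0 : ∀ n, p n 0 ∈ Set.Icc 0 1)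
    (hle : ∀ n K, ∑ j ∈ Fintype.piFinset fun _ => range K, p n j ≤ 1)
    (htight : ∀ K : ℕ, 0 < K →
      ∀ᶠ n in l, 1 - C / K ≤ ∑ j ∈ Fintype.piFinset fun _ => range K, p n j) (j : ι → ℕ) :
    Tendsto (fun n => p n j) l (𝓝 (∏ i, Real.exp (-μ i) * μ i ^ j i / (j i).factorial)) := by
  have h := (tendsto_sub_poissonWeight_mul hrec j).add
    ((tendsto_zero_of_tight hrec h0 hle htight).const_mul (poissonWeight μ j))
  have hlim : 0 + poissonWeight μ j * Real.exp (-∑ i, μ i) =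
      ∏ i, Real.exp (-μ i) * μ i ^ j i / (j i).factorial := by
    rw [zero_add, mul_comm, poissonWeight, ← sum_neg_distrib, Real.exp_sum, ← prod_mul_distrib]
    simp only [mul_div_assoc]
  rw [hlim] at h
  simpa using h

end Poisson

section Recurrence

open PerfectMatching

variable {ι α V : Type*} [Fintype α] {b : α → V} {ℓ : ι → ℕ} [∀ i, NeZero (ℓ i)]
  {E : Finset (Sym2 α)} {j : ι → ℕ} {k : ι} {ω : PerfectMatching α}

variable (b ℓ) in
/-- The vector of the numbers of circuits of lengths `ℓ i`. -/
noncomputable def circuitCounts (ω : PerfectMatching α) (i : ι) : ℕ :=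
  circuitCount b (ℓ i) ω

variable (b ℓ) in
/-- The vector of the numbers of circuits of lengths `ℓ i` other than `E`. -/
noncomputable def otherCircuitCounts (E : Finset (Sym2 α)) (ω : PerfectMatching α) (i : ι) : ℕ :=
  #{C ∈ circuits b (ℓ i) | C ≠ E ∧ C ⊆ ω.edges}

lemma otherCircuitCounts_of_not_subset (h : ¬ E ⊆ ω.edges) :
    otherCircuitCounts b ℓ E ω = circuitCounts b ℓ ω := by
  ext i
  refine congr_arg card (filter_congr fun C _ => and_iff_right_of_imp ?_)
  rintro hC rfl
  exact h hC

lemma circuitCounts_of_subset (hℓ : Function.Injective ℓ) (hE : E ∈ circuits b (ℓ k))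
    (h : E ⊆ ω.edges) :
    circuitCounts b ℓ ω = otherCircuitCounts b ℓ E ω + Pi.single k 1 := by
  ext i
  have herase : ({C ∈ circuits b (ℓ i) | C ≠ E ∧ C ⊆ ω.edges} : Finset _) =
      ({C ∈ circuits b (ℓ i) | C ⊆ ω.edges} : Finset _).erase E := by
    ext C
    simp [and_left_comm]
  rw [Pi.add_apply, otherCircuitCounts, herase]
  rcases eq_or_ne i k with rfl | hik
  · rw [Pi.single_eq_same, card_erase_add_one (mem_filter.2 ⟨hE, h⟩), circuitCounts, circuitCount]
  · have hE' : E ∉ ({C ∈ circuits b (ℓ i) | C ⊆ ω.edges} : Finset _) := fun hE' => hik <| hℓ <|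
      (card_of_mem_circuits (mem_filter.1 hE').1).symm.trans (card_of_mem_circuits hE)
    rw [Pi.single_eq_of_ne hik, erase_eq_of_notMem hE', add_zero, circuitCounts, circuitCount]

lemma sum_prob_subset_edges_and :
    ∑ E ∈ circuits b (ℓ k), prob univ (fun ω => E ⊆ edges ω ∧
      circuitCounts b ℓ ω = j + Pi.single k 1) =
      (j k + 1) * prob univ (circuitCounts b ℓ · = j + Pi.single k 1) := by
  rw [sum_prob_and (K := j k + 1)]
  · push_cast
    rfl
  · intro ω _ hω
    simpa [circuitCounts, circuitCount] using congr_fun hω k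

variable [Fintype ι] [Fintype V] {d : ℕ}

variable (ℓ) in
/-- With `e = ℓ k`, bounds the conditional mean number of short circuits meeting a given circuit of
length `e`, up to a factor `1 / |V|`. -/
def couplingConst (d e : ℕ) : ℝ := ∑ i, (d ^ 2 * (2 * e + 1) : ℝ) ^ ℓ i

omit [Fintype ι] [Fintype V] in
lemma pairwise_disjoint_circuits (hℓ : Function.Injective ℓ) :
    Pairwise (Function.onFun Disjoint fun i => circuits b (ℓ i)) := fun _ _ hne =>
  disjoint_left.2 fun _ hC hC' =>
    hne (hℓ ((card_of_mem_circuits hC).symm.trans (card_of_mem_circuits hC')))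

lemma abs_prob_sub_prob_containing_otherCircuitCounts_le (hℓ : Function.Injective ℓ)
    (hb : ∀ v, #(halfEdgesAt b v) ≤ d)
    (hV : 0 < Fintype.card V) (hα : ∀ i, Fintype.card V + 2 * (ℓ k + ℓ i) ≤ Fintype.card α)
    (hE : E ∈ circuits b (ℓ k)) :
    |prob univ (otherCircuitCounts b ℓ E · = j) -
      prob (containing E) (otherCircuitCounts b ℓ E · = j)| ≤
      ℓ k * (3 * (couplingConst ℓ d (ℓ k) / Fintype.card V)) := by
  have hcard := card_of_mem_circuits hE
  have hdisj := (pairwise_disjoint_circuits (b := b) hℓ).set_pairwise (univ : Finset ι)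
  rw [← hcard] at hα ⊢
  refine abs_prob_univ_sub_prob_containing_le (𝓒 := univ.biUnion fun i => circuits b (ℓ i))
    (isPartialMatching_of_mem_circuits hE) hV (by have := hα k; omega)
    (fun M hM => ?_) (fun M hM => ?_) fun ω ω' h => ?_
  · rw [overlapping, sum_filter, sum_biUnion hdisj, couplingConst, sum_div]
    refine sum_le_sum fun i _ => ?_
    rw [← sum_filter]
    exact sum_overlapping_prob_containing_le hb hV (hα i) hM
  · rw [div_mul_cancel₀ _ (by positivity), couplingConst, sum_biUnion hdisj]
    refine sum_le_sum fun i _ => ?_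
    exact sum_circuits_prob_containing_le hb hV (hα i) hM
  · suffices otherCircuitCounts b ℓ E ω = otherCircuitCounts b ℓ E ω' by rw [this]
    ext i
    refine congr_arg card (filter_congr fun C hC => and_congr_right fun hCE => ?_)
    exact h C (mem_biUnion.2 ⟨i, mem_univ i, hC⟩) fun hsub =>
      hCE (eq_of_subset_of_mem_circuits hC hE hsub)

omit [Fintype ι] in
lemma abs_prob_circuitCounts_sub_prob_otherCircuitCounts_le
    (hV : 0 < Fintype.card V) (hα : Fintype.card V + 2 * ℓ k ≤ Fintype.card α)
    (hE : E ∈ circuits b (ℓ k)) :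
    |prob univ (otherCircuitCounts b ℓ E · = j) - prob univ (circuitCounts b ℓ · = j)| ≤
      1 / Fintype.card V := by
  have hcard := card_of_mem_circuits hE
  calc _ ≤ prob univ (E ⊆ edges ·) := abs_prob_sub_prob_le fun ω _ hω => by
        rw [otherCircuitCounts_of_not_subset hω]
    _ ≤ (1 / Fintype.card V : ℝ) ^ ℓ k := by
        simpa [hcard] using prob_containing_subset_edges_le (M := ∅) (C := E) hV (by simp; omega)
    _ ≤ 1 / Fintype.card V := pow_le_of_le_one (by positivity)
        (by simpa using Nat.cast_inv_le_one _) (NeZero.ne _)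

theorem abs_mul_prob_circuitCounts_sub_le (hℓ : Function.Injective ℓ)
    (hb : ∀ v, #(halfEdgesAt b v) ≤ d) (hV : 0 < Fintype.card V)
    (hα : ∀ i, Fintype.card V + 2 * (ℓ k + ℓ i) ≤ Fintype.card α) :
    |(j k + 1) * prob univ (circuitCounts b ℓ · = j + Pi.single k 1) -
      meanCircuitCount b (ℓ k) * prob univ (circuitCounts b ℓ · = j)| ≤
      meanCircuitCount b (ℓ k) * ((3 * ℓ k * couplingConst ℓ d (ℓ k) + 1) / Fintype.card V) := by
  rw [← sum_prob_subset_edges_and, meanCircuitCount, sum_mul, sum_mul, ← sum_sub_distrib]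
  refine (abs_sum_le_sum_abs _ _).trans (sum_le_sum fun E hE => ?_)
  have hsplit : prob univ (fun ω => E ⊆ edges ω ∧ circuitCounts b ℓ ω = j + Pi.single k 1) =
      prob univ (E ⊆ edges ·) * prob (containing E) (otherCircuitCounts b ℓ E · = j) := by
    rw [containing, prob_mul_prob_filter]
    refine prob_congr fun ω _ => and_congr_right fun hω => ?_
    rw [circuitCounts_of_subset hℓ hE hω, add_left_inj]
  rw [hsplit, ← mul_sub, abs_mul, abs_of_nonneg prob_nonneg]
  gcongr
  · exact prob_nonneg
  have h₁ := abs_prob_sub_prob_containing_otherCircuitCounts_le (j := j) hℓ hb hV hα hE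
  have h₂ := abs_prob_circuitCounts_sub_prob_otherCircuitCounts_le (j := j) hV
    (by have := hα k; omega) hE
  rw [abs_sub_comm] at h₁
  calc _ ≤ _ := (abs_sub_le _ _ _).trans (add_le_add h₁ h₂)
    _ = _ := by ring

omit [Fintype V] in
lemma one_sub_le_sum_prob_circuitCounts [Nonempty (PerfectMatching α)] {K : ℕ} (hK : 0 < K) :
    1 - (∑ i, meanCircuitCount b (ℓ i)) / K ≤
      ∑ j ∈ Fintype.piFinset fun _ => range K, prob univ (circuitCounts b ℓ · = j) := by
  have hmarkov (i : ι) : prob univ (K ≤ circuitCounts b ℓ · i) ≤ meanCircuitCount b (ℓ i) / K := by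
    rw [le_div_iff₀' (mod_cast hK)]
    exact mul_prob_le_sum_prob (circuits b (ℓ i)) (fun C ω => C ⊆ edges ω) K
  have hexists := prob_exists_le (S := univ) univ fun i ω => K ≤ circuitCounts b ℓ ω i
  have hnot := prob_not (Q := fun ω => ∃ i ∈ univ, K ≤ circuitCounts b ℓ ω i)
    (univ_nonempty (α := PerfectMatching α))
  rw [sum_prob_eq]
  simp only [mem_univ, true_and, not_exists, not_le] at hnot hexists
  simp only [Fintype.mem_piFinset, mem_range]
  rw [hnot, sum_div]
  gcongr
  exact hexists.trans (sum_le_sum fun i _ => hmarkov i)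

end Recurrence

section Limit

open PerfectMatching Filter Topology

variable {ι P : Type*} {l : Filter P} {α V : P → Type*}
  [∀ n, Fintype (α n)] [∀ n, Fintype (V n)] {b : ∀ n, α n → V n} {d : ℕ}
  {ℓ : ι → ℕ} [∀ i, NeZero (ℓ i)]

lemma eventually_card_add_le (hd : 2 ≤ d) (hb : ∀ n v, #(halfEdgesAt (b n) v) = d)
    (hV : Tendsto (fun n => Fintype.card (V n)) l atTop) (c : ℕ) :
    ∀ᶠ n in l, Fintype.card (V n) + c ≤ Fintype.card (α n) := by
  filter_upwards [hV.eventually_ge_atTop c] with n hn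
  rw [card_eq_mul_card (hb n)]
  nlinarith

lemma tendsto_recurrence_circuitCounts [Finite ι] (hd : 2 ≤ d)
    (hb : ∀ n v, #(halfEdgesAt (b n) v) = d)
    (hV : Tendsto (fun n => Fintype.card (V n)) l atTop)
    (hα : ∀ᶠ n in l, Even (Fintype.card (α n))) (hℓ : Function.Injective ℓ) (j : ι → ℕ) (k : ι) :
    Tendsto (fun n => (j k + 1) * prob univ (circuitCounts (b n) ℓ · = j + Pi.single k 1) -
      (d - 1) ^ ℓ k / (2 * ℓ k) * prob univ (circuitCounts (b n) ℓ · = j)) l (𝓝 0) := by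
  cases nonempty_fintype ι
  have hmean := tendsto_meanCircuitCount (k := ℓ k) hd hb hV hα
  have hVinv := (tendsto_natCast_atTop_atTop (R := ℝ)).comp hV
  have herror : Tendsto (fun n => meanCircuitCount (b n) (ℓ k) *
      ((3 * ℓ k * couplingConst ℓ d (ℓ k) + 1) / Fintype.card (V n)) +
      |meanCircuitCount (b n) (ℓ k) - (d - 1) ^ ℓ k / (2 * ℓ k)|) l (𝓝 0) := by
    simpa using (hmean.mul (hVinv.const_div_atTop (3 * ℓ k * couplingConst ℓ d (ℓ k) + 1))).add
      (hmean.sub_const ((d - 1) ^ ℓ k / (2 * ℓ k))).abs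
  refine squeeze_zero_norm' ?_ herror
  filter_upwards [hV.eventually_gt_atTop 0,
    eventually_all.2 fun i => eventually_card_add_le hd hb hV (2 * (ℓ k + ℓ i))] with n hn hcard
  have h := abs_mul_prob_circuitCounts_sub_le (j := j) hℓ (fun v => (hb n v).le) hn hcard
  set m := meanCircuitCount (b n) (ℓ k)
  set p := prob univ (circuitCounts (b n) ℓ · = j)
  have hp : |(m - (d - 1) ^ ℓ k / (2 * ℓ k)) * p| ≤ |m - (d - 1) ^ ℓ k / (2 * ℓ k)| := by
    rw [abs_mul, abs_of_nonneg (prob_nonneg (Q := (circuitCounts (b n) ℓ · = j)))]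
    exact mul_le_of_le_one_right (abs_nonneg _) prob_le_one
  rw [sub_mul] at hp
  exact (abs_sub_le _ (m * p) _).trans (add_le_add h hp)

lemma eventually_one_sub_le_sum_prob_circuitCounts [Fintype ι] (hd : 2 ≤ d)
    (hb : ∀ n v, #(halfEdgesAt (b n) v) = d)
    (hV : Tendsto (fun n => Fintype.card (V n)) l atTop)
    (hα : ∀ᶠ n in l, Even (Fintype.card (α n))) {K : ℕ} (hK : 0 < K) :
    ∀ᶠ n in l, 1 - (1 + ∑ i, (d - 1 : ℝ) ^ ℓ i / (2 * ℓ i)) / K ≤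
      ∑ j ∈ Fintype.piFinset fun _ => range K, prob univ (circuitCounts (b n) ℓ · = j) := by
  have hmean := tendsto_finsetSum univ fun i _ => tendsto_meanCircuitCount (k := ℓ i) hd hb hV hα
  filter_upwards [hα, hmean.eventually_le_const (lt_one_add _)] with n hn hle
  have := nonempty_of_even_card hn
  refine le_trans ?_ (one_sub_le_sum_prob_circuitCounts hK)
  gcongr

end Limit

section CircuitCount

open PerfectMatching

variable {α V : Type*} [Fintype α] {b : α → V} {k : ℕ} {ω : PerfectMatching α}

section

variable [NeZero k]

variable (b k ω) in
/-- The sequences of half-edges through which the rooted directed traversals of the circuits of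
`ω` of length `k` leave their successive vertices. -/
noncomputable def exits : Finset (ZMod k → α) :=
  {h | Function.Injective (fun i => b (h i)) ∧
    ∀ i, ω (h i) ≠ h (i + 1) ∧ b (ω (h i)) = b (h (i + 1))}

lemma mem_exits {h : ZMod k → α} :
    h ∈ exits b k ω ↔ Function.Injective (fun i => b (h i)) ∧
      ∀ i, ω (h i) ≠ h (i + 1) ∧ b (ω (h i)) = b (h (i + 1)) := by
  simp [exits]

lemma traversalEdges_subset_edges_iff {u : ZMod k → α × α} :
    traversalEdges u ⊆ ω.edges ↔ ∀ i, ω (u i).1 = (u (i + 1)).2 := by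
  simp [traversalEdges, traversalEdge, image_subset_iff, mk_mem_edges]

variable (b k ω) in
lemma card_exits : #(exits b k ω) = 2 * k * circuitCount b k ω := by
  rw [← card_traversals_subset_edges, eq_comm]
  refine card_bij' (fun u _ i => (u i).1) (fun h _ i => (h i, ω (h (i - 1)))) ?_ ?_ ?_ ?_
  · intro u hu
    simp only [mem_filter, mem_traversals, traversalEdges_subset_edges_iff] at hu
    obtain ⟨hu, hω⟩ := hu
    refine mem_exits.2 ⟨hu.1, fun i => ?_⟩
    rw [hω]
    exact ⟨(hu.2 _).1.symm, (hu.2 _).2.symm⟩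
  · intro h hh
    obtain ⟨hinj, hh⟩ := mem_exits.1 hh
    simp only [mem_filter, mem_traversals, traversalEdges_subset_edges_iff, add_sub_cancel_right,
      implies_true, and_true]
    exact ⟨hinj, fun i => by simpa [eq_comm] using hh (i - 1)⟩
  · intro u hu
    simp only [mem_filter, traversalEdges_subset_edges_iff] at hu
    ext i
    · rfl
    · simp [hu.2]
  · simp

end

variable (b ω) in
lemma card_loops : Nat.card {a // b (ω a) = b a} = 2 * circuitCount b 1 ω := by
  rw [Nat.subtype_card _ fun _ => mem_filter_univ _, ← mul_one 2, ← card_exits, eq_comm]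
  have hzero (i : ZMod 1) : i = 0 := Subsingleton.elim _ _
  refine card_bij' (fun (h : ZMod 1 → α) _ => h 0) (fun a _ _ => a) ?_ ?_ (fun h _ => ?_)
    (fun _ _ => rfl)
  · intro h hh
    simpa [hzero 1] using ((mem_exits.1 hh).2 0).2
  · intro a ha
    exact mem_exits.2 ⟨fun i i' _ => Subsingleton.elim _ _,
      fun _ => ⟨ω.apply_ne a, by simpa using ha⟩⟩
  · ext i
    rw [hzero i]

lemma mem_exits_iff_of_three_le [NeZero k] (hk : 3 ≤ k) {h : ZMod k → α} :
    h ∈ exits b k ω ↔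
      Function.Injective (fun i => b (h i)) ∧ ∀ i, b (ω (h i)) = b (h (i + 1)) := by
  rw [mem_exits]
  refine and_congr_right fun hinj => ⟨fun hh i => (hh i).2, fun hh i => ⟨fun heq => ?_, hh i⟩⟩
  have hreturn : i = i + 1 + 1 := hinj <| by
    simp only [← hh (i + 1), ω.apply_eq_comm.1 heq]
  have htwo : ((2 : ℕ) : ZMod k) = 0 := by
    push_cast
    linear_combination -hreturn
  exact absurd (Nat.le_of_dvd two_pos ((ZMod.natCast_eq_zero_iff _ _).1 htwo)) (by omega)

variable (b ω) in
lemma card_cycles [NeZero k] (hk : 3 ≤ k) :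
    Nat.card {p : (ZMod k → V) × (ZMod k → α) // Function.Injective p.1 ∧
      ∀ i, b (p.2 i) = p.1 i ∧ b (ω (p.2 i)) = p.1 (i + 1)} = 2 * k * circuitCount b k ω := by
  rw [← card_exits, ← Nat.card_eq_finsetCard]
  refine Nat.card_congr
    { toFun := fun p => ⟨p.1.2, (mem_exits_iff_of_three_le hk).2 ?_⟩
      invFun := fun h => ⟨(fun i => b (h.1 i), h.1), ?_⟩
      left_inv := fun p => Subtype.ext (Prod.ext (funext fun i => (p.2.2 i).1) rfl)
      right_inv := fun _ => rfl }
  · obtain ⟨⟨c, h⟩, hinj, hh⟩ := p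
    obtain rfl : (fun i => b (h i)) = c := funext fun i => (hh i).1
    exact ⟨hinj, fun i => (hh i).2⟩
  · have hh := (mem_exits_iff_of_three_le hk).1 h.2
    exact ⟨hh.1, fun i => ⟨rfl, hh.2 i⟩⟩

variable (b ω) in
/-- The half-edges of the vertex `v` that are matched to a half-edge of the vertex `w`. -/
noncomputable def joining (v w : V) : Finset α :=
  {a | b a = v ∧ b (ω a) = w}

lemma mem_joining {v w : V} {a : α} : a ∈ joining b ω v w ↔ b a = v ∧ b (ω a) = w := by
  simp [joining]

lemma card_joining_comm (v w : V) : #(joining b ω v w) = #(joining b ω w v) :=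
  card_bij' (fun a _ => ω a) (fun a _ => ω a) (by simp [mem_joining, apply_apply, and_comm])
    (by simp [mem_joining, apply_apply, and_comm]) (fun a _ => ω.apply_apply a)
    (fun a _ => ω.apply_apply a)

lemma mem_exits_two {h : ZMod 2 → α} :
    h ∈ exits b 2 ω ↔ b (h 0) ≠ b (h 1) ∧ ω (h 0) ≠ h 1 ∧ b (ω (h 0)) = b (h 1) ∧
      b (ω (h 1)) = b (h 0) := by
  rw [mem_exits]
  simp only [Function.Injective]
  have hall {p : ZMod 2 → Prop} : (∀ i, p i) ↔ p 0 ∧ p 1 := Fin.forall_fin_two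
  have hone : (1 + 1 : ZMod 2) = 0 := rfl
  simp only [hall, zero_add, hone, ω.apply_eq_comm (a := h 1), Ne]
  have h01 : (0 : ZMod 2) ≠ 1 := zero_ne_one
  have := @eq_comm _ (b (h 0)) (b (h 1))
  have := @eq_comm _ (h 1) (ω (h 0))
  tauto

lemma card_filter_exits_two {v w : V} (hvw : v ≠ w) :
    #{h ∈ exits b 2 ω | (b (h 0), b (h 1)) = (v, w)} = #(joining b ω v w).offDiag := by
  refine card_bij' (fun h _ => (h 0, ω (h 1))) (fun p _ i => if i = 0 then p.1 else ω p.2)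
    ?_ ?_ ?_ ?_
  · intro h hh
    rw [mem_filter, mem_exits_two, Prod.mk_inj] at hh
    obtain ⟨⟨-, hne, h₀, h₁⟩, rfl, rfl⟩ := hh
    simp only [mem_offDiag, mem_joining, apply_apply, Ne, true_and, and_true]
    exact ⟨h₀, h₁, fun h => hne (ω.apply_eq_comm.1 h.symm)⟩
  · rintro ⟨x, y⟩ hp
    simp only [mem_offDiag, mem_joining] at hp
    obtain ⟨⟨rfl, rfl⟩, ⟨hyx, hyy⟩, hxy⟩ := hp
    simp only [mem_filter, mem_exits_two, one_ne_zero, if_true, if_false, apply_apply, hyx, hyy]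
    exact ⟨⟨hvw, fun h => hxy (ω.1.injective h), trivial, trivial⟩, trivial⟩
  · intro h _
    have hall {p : ZMod 2 → Prop} : (∀ i, p i) ↔ p 0 ∧ p 1 := Fin.forall_fin_two
    exact funext (hall.2 ⟨rfl, by simp [apply_apply]⟩)
  · simp [apply_apply]

variable (b ω) in
lemma sum_card_offDiag_joining [Fintype V] :
    ∑ v, ∑ w ∈ {v}ᶜ, #(joining b ω w v).offDiag = 4 * circuitCount b 2 ω := by
  have hsum : #(exits b 2 ω) =
      ∑ v, ∑ w, #{h ∈ exits b 2 ω | (b (h 0), b (h 1)) = (w, v)} := by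
    rw [sum_comm, ← Fintype.sum_prod_type']
    exact card_eq_sum_card_fiberwise fun _ _ => mem_coe.2 (mem_univ _)
  rw [show 4 * circuitCount b 2 ω = #(exits b 2 ω) from (card_exits b 2 ω).symm, hsum]
  refine sum_congr rfl fun v _ => ?_
  rw [← sum_subset (subset_univ ({v}ᶜ : Finset V))]
  · exact sum_congr rfl fun w hw => (card_filter_exits_two (by simpa using hw)).symm
  · intro w _ hw
    obtain rfl : w = v := by simpa using hw
    refine card_eq_zero.2 (filter_eq_empty_iff.2 fun h hh heq => (mem_exits_two.1 hh).1 ?_)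
    rw [Prod.mk_inj] at heq
    exact heq.1.trans heq.2.symm

variable (b ω) in
lemma sum_choose_card_joining [Fintype V] [LinearOrder V] [LocallyFiniteOrderTop V]
    [LocallyFiniteOrderBot V] :
    ∑ v, ∑ w, (if v < w then (#(joining b ω v w)).choose 2 else 0) = circuitCount b 2 ω := by
  have hchoose (v w : V) : #(joining b ω v w).offDiag = 2 * (#(joining b ω v w)).choose 2 := by
    rw [offDiag_card, Nat.choose_two_right, Nat.mul_div_cancel' (Nat.even_mul_pred_self _).two_dvd,
      Nat.mul_sub_one]
  refine Nat.eq_of_mul_eq_mul_left four_pos ?_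
  have hdouble := sum_sum_Ioi_add_eq_sum_sum_off_diag fun w v => #(joining b ω w v).offDiag
  rw [← sum_card_offDiag_joining]
  convert hdouble using 1
  · simp only [mul_sum, hchoose, ← filter_lt_eq_Ioi, sum_filter, mul_ite, mul_zero]
    refine sum_congr rfl fun v _ => sum_congr rfl fun w _ => if_congr Iff.rfl ?_ rfl
    rw [card_joining_comm w v]
    ring
  · congr!

end CircuitCount

section CubicModel

variable {N : ℕ}

lemma card_halfEdgesAt_blk (v : Fin N) : #(halfEdgesAt (blk (N := N)) v) = 3 := by
  refine (card_bij' (fun (r : Fin 3) _ => (⟨3 * v + r, by omega⟩ : Fin (3 * N)))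
    (fun a _ => ⟨a % 3, Nat.mod_lt _ three_pos⟩) (s := univ) ?_ ?_ ?_ ?_).symm.trans (by simp)
  · simp only [mem_univ, mem_halfEdgesAt, blk, Fin.ext_iff]
    omega
  · simp
  · simp only [mem_univ, Fin.ext_iff]
    omega
  · simp only [mem_halfEdgesAt, blk, Fin.ext_iff]
    omega

/-- The elements of `Omega N` as perfect matchings of the half-edges. -/
def omegaEquiv : Omega N ≃ PerfectMatching (Fin (3 * N)) :=
  Equiv.refl _

lemma omegaEquiv_apply (ω : Omega N) (a : Fin (3 * N)) : omegaEquiv ω a = ω.val a := rfl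

section

variable (ω : Omega N)

lemma X1_eq_circuitCount : X1 ω = circuitCount blk 1 (omegaEquiv ω) :=
  Nat.div_eq_of_eq_mul_right two_pos (card_loops blk (omegaEquiv ω))

lemma mult_eq_card_joining {v w : Fin N} (hvw : v ≠ w) :
    mult ω v w = #(joining blk (omegaEquiv ω) v w) := by
  rw [mult, if_neg hvw]
  exact Nat.subtype_card _ (by simp [mem_joining, omegaEquiv_apply])

lemma X2_eq_circuitCount : X2 ω = circuitCount blk 2 (omegaEquiv ω) := by
  rw [X2, ← sum_choose_card_joining]
  refine sum_congr rfl fun v _ => sum_congr rfl fun w _ => ?_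
  split_ifs with hvw
  · rw [mult_eq_card_joining ω hvw.ne]
  · rfl

lemma Xcyc_eq_circuitCount {k : ℕ} [NeZero k] (hk : 3 ≤ k) :
    Xcyc k ω = circuitCount blk k (omegaEquiv ω) :=
  Nat.div_eq_of_eq_mul_right (mul_pos two_pos (NeZero.pos k)) (card_cycles blk (omegaEquiv ω) hk)

lemma X_eq_circuitCount : ∀ (k : ℕ) [NeZero k], X ω k = circuitCount blk k (omegaEquiv ω)
  | 0, h => absurd rfl h.out
  | 1, _ => X1_eq_circuitCount ω
  | 2, _ => X2_eq_circuitCount ω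
  | _ + 3, _ => Xcyc_eq_circuitCount ω (Nat.le_add_left 3 _)

end

lemma prob_circuitCounts_blk (I : Finset ℕ) [∀ i : I, NeZero i.1] (j : ℕ → ℕ) :
    prob univ (circuitCounts (blk (N := N)) (fun i : I => i.1) · = fun i : I => j i) =
      Nat.card {ω : Omega N // ∀ i ∈ I, X ω i = j i} / Nat.card (Omega N) := by
  rw [prob_univ, Nat.card_congr omegaEquiv]
  congr 2
  refine (Nat.card_congr (omegaEquiv.subtypeEquiv fun ω => ?_)).symm
  rw [funext_iff, Subtype.forall]
  refine forall₂_congr fun i hi => ?_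
  have : NeZero i := ‹∀ i : I, NeZero i.1› ⟨i, hi⟩
  rw [X_eq_circuitCount, circuitCounts]

end CubicModel

end ConfigurationModel

open ConfigurationModel

theorem circuit_counts_poisson_limit_general {P ι : Type*} {l : Filter P} {α V : P → Type*}
    [∀ n, Fintype (α n)] [∀ n, Fintype (V n)] [Fintype ι] {b : ∀ n, α n → V n} {d : ℕ}
    {ℓ : ι → ℕ} [∀ i, NeZero (ℓ i)] (hd : 2 ≤ d) (hb : ∀ n v, (halfEdgesAt (b n) v).card = d)
    (hV : Tendsto (fun n => Fintype.card (V n)) l atTop)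
    (hα : ∀ᶠ n in l, Even (Fintype.card (α n))) (hℓ : Function.Injective ℓ) (j : ι → ℕ) :
    Tendsto (fun n => prob .univ (circuitCounts (b n) ℓ · = j)) l
      (𝓝 (∏ i, Real.exp (-((d - 1) ^ ℓ i / (2 * ℓ i))) * ((d - 1) ^ ℓ i / (2 * ℓ i)) ^ j i /
        (j i).factorial)) :=
  tendsto_poisson_of_tight (p := fun n j => prob .univ (circuitCounts (b n) ℓ · = j))
    (tendsto_recurrence_circuitCounts hd hb hV hα hℓ)
    (fun _ => ⟨prob_nonneg, prob_le_one⟩) (fun _ _ => (sum_prob_eq _ _).trans_le prob_le_one)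
    (fun _ hK => eventually_one_sub_le_sum_prob_circuitCounts hd hb hV hα hK) j

/-- Theorem (Bollobás): the short circuit counts converge jointly in distribution to
independent Poisson variables with means `λ_i = 2^i/(2i)`. -/
theorem circuit_counts_poisson_limit (m : ℕ) (hm : 1 ≤ m) (j : ℕ → ℕ) :
    Tendsto
      (fun N : ℕ =>
        (Nat.card {ω : Omega N // ∀ i ∈ Finset.Icc 1 m, X ω i = j i} : ℝ) /
          (Nat.card (Omega N) : ℝ))
      (atTop ⊓ 𝓟 {N : ℕ | Even N})
      (𝓝 (∏ i ∈ Finset.Icc 1 m,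
        Real.exp (-((2 : ℝ) ^ i / (2 * i))) * ((2 : ℝ) ^ i / (2 * i)) ^ (j i) /
          (Nat.factorial (j i) : ℝ))) := by
  have (i : Finset.Icc 1 m) : NeZero i.1 := ⟨Nat.one_le_iff_ne_zero.1 (Finset.mem_Icc.1 i.2).1⟩
  have hcard : Tendsto (fun N => Fintype.card (Fin N)) (atTop ⊓ 𝓟 {N : ℕ | Even N}) atTop :=
    (tendsto_inf_left tendsto_id).congr fun N => (Fintype.card_fin N).symm
  have heven : ∀ᶠ N in atTop ⊓ 𝓟 {N : ℕ | Even N}, Even (Fintype.card (Fin (3 * N))) :=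
    eventually_inf_principal.2 <| .of_forall fun N (hN : Even N) => by simpa using hN.mul_left 3
  have hlim := circuit_counts_poisson_limit_general (b := fun N => blk (N := N)) (by norm_num)
    (fun _ => card_halfEdgesAt_blk) hcard heven Subtype.val_injective
    (fun i : Finset.Icc 1 m => j i)
  rw [← Finset.prod_coe_sort]
  convert hlim using 5 with N
  · exact (prob_circuitCounts_blk (Finset.Icc 1 m) j).symm
  all_goals norm_num
end

section
/- Let H be a fixed finite simple graph with vertex set V and edge set E, both nonempty, such that |E| > |V|. Then there exists a constant C > 0 such that for every even N, the expected number of copies of H in the configuration-model multigraph Γ(ω) is at most C/N; here the number of copies of H in Γ(ω) is the number of pairs (f, g) where f : V → Fin N is injective, g is an injective map from E to the set of matched pairs of ω, and for every edge {x,y} ∈ E the matched pair g({x,y}) consists of one half-edge in block B_{f(x)} and one half-edge in block B_{f(y)}. -/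
open Filter Real Topology

/-- The number of copies of a simple graph `H` in the multigraph `Γ(ω)`: pairs `(f, g)`
of an injection `f` of the vertices of `H` into the blocks and an injection `g` of the
edges of `H` into the matched pairs of `ω`, such that the matched pair assigned to an
edge `{x, y}` consists of one half-edge in `B_{f x}` and one in `B_{f y}`. -/
noncomputable def copies {V : Type*} (H : SimpleGraph V) {N : ℕ} (ω : Omega N) : ℕ :=
  Nat.card {fg : (V → Fin N) × (H.edgeSet → Sym2 (Fin (3 * N))) //
    Function.Injective fg.1 ∧ Function.Injective fg.2 ∧
      ∀ e : H.edgeSet, (∃ a, fg.2 e = s(a, ω.val a)) ∧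
        Sym2.map blk (fg.2 e) = Sym2.map fg.1 e.val}

/-!
Every placement of `H` (an injective choice of blocks for the vertices and of distinct pairs of
half-edges for the edges) has probability `O(N ^ (-|E|))` of consisting of matched pairs, and there
are `O(N ^ |V|)` placements, so linearity of expectation gives the bound `O(N ^ (|V| - |E|))`.

The probability that a random matching contains a given set of pairs is estimated one pair at a
time by switching: if `ω` matches `a` with `b`, then conjugating `ω` by the transposition `(b c)`
gives a matching in which `a` is matched with `c`. As `c` ranges over the half-edges that avoid
the pairs already prescribed, these matchings are all distinct and contain those pairs.
-/

open Equiv Finset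
open scoped Nat

lemma mul_pow_div_pow_le_div_of_lt {K : Type*} [Field K] [LinearOrder K] [IsStrictOrderedRing K]
    {C : K} (hC : 0 ≤ C) {m n : ℕ} (hmn : m < n) (N : ℕ) :
    C * (N : K) ^ m / (N : K) ^ n ≤ C / N := by
  rcases N.eq_zero_or_pos with rfl | hN
  · simp [(Nat.zero_le m).trans_lt hmn |>.ne']
  rw [div_le_div_iff₀ (by positivity) (by positivity), mul_assoc, ← pow_succ]
  gcongr
  · exact_mod_cast hN
  · exact hmn

section PerfectMatchings

variable {α : Type*} [Fintype α] [DecidableEq α] {ω : Perm α} {p : Sym2 α} {T : Finset (Sym2 α)}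
  {a b : α}

/-- The perfect matchings of a finite type, encoded as its fixed-point-free involutions. -/
def perfectMatchings (α : Type*) [Fintype α] [DecidableEq α] : Finset (Perm α) :=
  {ω | ∀ a, ω (ω a) = a ∧ ω a ≠ a}

/-- The pairs `{a, ω a}` of a matching, defined for an arbitrary permutation `ω`. -/
def matchedPairs (ω : Perm α) : Finset (Sym2 α) :=
  univ.image fun a => s(a, ω a)

/-- The perfect matchings extending a prescribed set `T` of pairs. -/
def matchingsContaining (T : Finset (Sym2 α)) : Finset (Perm α) :=
  {ω ∈ perfectMatchings α | T ⊆ matchedPairs ω}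

/-- The points other than `a` that lie in no pair of `T`: the candidates for the partner of `a`
in a matching that contains `T`. -/
def freePartners (T : Finset (Sym2 α)) (a : α) : Finset α :=
  univ \ insert a (T.biUnion Sym2.toFinset)

lemma mem_perfectMatchings : ω ∈ perfectMatchings α ↔ ∀ a, ω (ω a) = a ∧ ω a ≠ a := by
  simp [perfectMatchings]

lemma mem_matchedPairs : p ∈ matchedPairs ω ↔ ∃ a, s(a, ω a) = p := by
  simp [matchedPairs]

lemma mem_matchingsContaining :
    ω ∈ matchingsContaining T ↔ ω ∈ perfectMatchings α ∧ T ⊆ matchedPairs ω :=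
  mem_filter

lemma mem_freePartners : b ∈ freePartners T a ↔ b ≠ a ∧ ∀ p ∈ T, b ∉ p := by
  simp [freePartners]

lemma matchingsContaining_empty :
    matchingsContaining (∅ : Finset (Sym2 α)) = perfectMatchings α := by
  simp [matchingsContaining]

lemma eq_mk_of_mem_matchedPairs (hω : ω ∈ perfectMatchings α) (hp : p ∈ matchedPairs ω)
    (ha : a ∈ p) : p = s(a, ω a) := by
  obtain ⟨x, rfl⟩ := mem_matchedPairs.1 hp
  rcases Sym2.mem_iff.1 ha with rfl | rfl
  · rfl
  · rw [(mem_perfectMatchings.1 hω x).1, Sym2.eq_swap]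

lemma conj_mem_perfectMatchings (σ : Perm α) (hω : ω ∈ perfectMatchings α) :
    σ * ω * σ⁻¹ ∈ perfectMatchings α := by
  rw [mem_perfectMatchings] at hω ⊢
  intro a
  obtain ⟨involutive, moves⟩ := hω (σ⁻¹ a)
  simp only [Perm.mul_apply, Perm.inv_def, symm_apply_apply] at involutive moves ⊢
  exact ⟨by rw [involutive, apply_symm_apply], fun h => moves ((eq_symm_apply σ).2 h)⟩

lemma matchedPairs_conj (σ ω : Perm α) :
    matchedPairs (σ * ω * σ⁻¹) = (matchedPairs ω).image (Sym2.map σ) := by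
  ext p
  simp only [mem_image, mem_matchedPairs, exists_exists_eq_and, Sym2.map_mk]
  exact σ⁻¹.surjective.exists.trans (by simp) |>.symm

lemma conj_mem_matchingsContaining {σ : Perm α} (hσ : ∀ p ∈ T, ∀ a ∈ p, σ a = a)
    (hω : ω ∈ matchingsContaining T) : σ * ω * σ⁻¹ ∈ matchingsContaining T := by
  rw [mem_matchingsContaining] at hω ⊢
  refine ⟨conj_mem_perfectMatchings σ hω.1, fun p hp => ?_⟩
  rw [matchedPairs_conj, mem_image]
  exact ⟨p, hω.2 hp, (Sym2.map_congr (hσ p hp)).trans (congrFun Sym2.map_id' p)⟩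

lemma apply_eq_of_mem_matchingsContaining (hω : ω ∈ matchingsContaining T) (h : s(a, b) ∈ T) :
    ω a = b := by
  obtain ⟨hω, hT⟩ := mem_matchingsContaining.1 hω
  exact (Sym2.congr_right.1 (eq_mk_of_mem_matchedPairs hω (hT h) (Sym2.mem_mk_left a b))).symm

lemma mem_freePartners_of_mem_matchingsContaining
    (hω : ω ∈ matchingsContaining (insert s(a, b) T)) (hab : s(a, b) ∉ T) :
    b ∈ freePartners T a := by
  have hωa : ω a = b := apply_eq_of_mem_matchingsContaining hω (mem_insert_self _ _)
  obtain ⟨hω, hT⟩ := mem_matchingsContaining.1 hω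
  obtain ⟨involutive, moves⟩ := mem_perfectMatchings.1 hω a
  rw [hωa] at involutive moves
  refine mem_freePartners.2 ⟨moves, fun p hp hbp => hab ?_⟩
  have hp_eq : p = s(b, ω b) :=
    eq_mk_of_mem_matchedPairs hω (hT (mem_insert_of_mem hp)) hbp
  rwa [hp_eq, involutive, Sym2.eq_swap] at hp

lemma card_le_card_freePartners_add (T : Finset (Sym2 α)) (a : α) :
    Fintype.card α ≤ #(freePartners T a) + (2 * #T + 1) := by
  have covered : #(T.biUnion Sym2.toFinset) ≤ #T * 2 :=
    card_biUnion_le_card_mul _ _ _ fun p _ => by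
      induction p with | _ x y => simpa [Sym2.toFinset_mk_eq] using card_le_two
  have excluded := card_insert_le a (T.biUnion Sym2.toFinset)
  have total := card_sdiff_add_card_inter univ (insert a (T.biUnion Sym2.toFinset))
  rw [univ_inter, card_univ] at total
  rw [freePartners]
  omega

/- The switching `(c, ω) ↦ (b c) ω (b c)` is injective because `c` is recovered as the new partner
of `a`. -/
lemma card_freePartners_mul_card_le (hb : b ∈ freePartners T a) :
    #(freePartners T a) * #(matchingsContaining (insert s(a, b) T)) ≤
      #(matchingsContaining T) := by
  rw [← card_product]
  obtain ⟨hba, hbT⟩ := mem_freePartners.1 hb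
  refine card_le_card_of_injOn (fun x => swap b x.1 * x.2 * (swap b x.1)⁻¹) ?_ ?_
  · rintro ⟨c, ω⟩ hx
    obtain ⟨hc, hω⟩ := mem_product.1 (mem_coe.1 hx)
    obtain ⟨-, hcT⟩ := mem_freePartners.1 hc
    obtain ⟨hω, hT⟩ := mem_matchingsContaining.1 hω
    refine conj_mem_matchingsContaining (fun p hp x hx => ?_)
      (mem_matchingsContaining.2 ⟨hω, (subset_insert _ _).trans hT⟩)
    exact swap_apply_of_ne_of_ne (fun h => hbT p hp (h ▸ hx)) fun h => hcT p hp (h ▸ hx)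
  · have new_partner : ∀ c ω, (c, ω) ∈ freePartners T a ×ˢ matchingsContaining (insert s(a, b) T) →
        (swap b c * ω * (swap b c)⁻¹) a = c := by
      intro c ω hx
      obtain ⟨hc, hω⟩ := mem_product.1 hx
      have hca : c ≠ a := (mem_freePartners.1 hc).1
      have hωa : ω a = b := apply_eq_of_mem_matchingsContaining hω (mem_insert_self _ _)
      simp [swap_apply_of_ne_of_ne hba.symm hca.symm, hωa]
    rintro ⟨c, ω⟩ hx ⟨c', ω'⟩ hx' (h : swap b c * ω * _ = swap b c' * ω' * _)
    obtain rfl : c = c' := by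
      rw [← new_partner c ω hx, ← new_partner c' ω' hx', h]
    rw [mul_left_injective _ |>.eq_iff, mul_right_injective _ |>.eq_iff] at h
    rw [h]

lemma card_matchingsContaining_insert_mul_le (hp : p ∉ T) :
    #(matchingsContaining (insert p T)) * Fintype.card α ≤
      #(matchingsContaining T) * (2 * (#T + 1)) := by
  rcases (matchingsContaining (insert p T)).eq_empty_or_nonempty with hempty | ⟨ω, hω⟩
  · simp [hempty]
  induction p with | _ a b
  have hb : b ∈ freePartners T a := mem_freePartners_of_mem_matchingsContaining hω hp
  have hcard : Fintype.card α ≤ #(freePartners T a) * (2 * (#T + 1)) := by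
    have hadd : Fintype.card α ≤ #(freePartners T a) + (2 * #T + 1) :=
      card_le_card_freePartners_add T a
    have hpos : 1 ≤ #(freePartners T a) := card_pos.2 ⟨b, hb⟩
    nlinarith
  calc #(matchingsContaining (insert s(a, b) T)) * Fintype.card α
      ≤ #(matchingsContaining (insert s(a, b) T)) * (#(freePartners T a) * (2 * (#T + 1))) := by
        gcongr
    _ = #(freePartners T a) * #(matchingsContaining (insert s(a, b) T)) * (2 * (#T + 1)) := by
        ring
    _ ≤ #(matchingsContaining T) * (2 * (#T + 1)) := by
        gcongr
        exact card_freePartners_mul_card_le hb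

lemma card_matchingsContaining_mul_pow_le (T : Finset (Sym2 α)) :
    #(matchingsContaining T) * Fintype.card α ^ #T ≤
      #(perfectMatchings α) * (2 ^ #T * (#T)!) := by
  induction T using Finset.induction_on with
  | empty => simp [matchingsContaining_empty]
  | insert p T hp ih =>
    rw [card_insert_of_notMem hp]
    calc #(matchingsContaining (insert p T)) * Fintype.card α ^ (#T + 1)
        = #(matchingsContaining (insert p T)) * Fintype.card α * Fintype.card α ^ #T := by ring
      _ ≤ #(matchingsContaining T) * (2 * (#T + 1)) * Fintype.card α ^ #T :=
          Nat.mul_le_mul_right _ (card_matchingsContaining_insert_mul_le hp)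
      _ = #(matchingsContaining T) * Fintype.card α ^ #T * (2 * (#T + 1)) := by ring
      _ ≤ #(perfectMatchings α) * (2 ^ #T * (#T)!) * (2 * (#T + 1)) := by gcongr
      _ = #(perfectMatchings α) * (2 ^ (#T + 1) * (#T + 1)!) := by
          rw [Nat.factorial_succ]; ring

end PerfectMatchings

section Fibers

variable {α β : Type*} [Fintype α] [DecidableEq β] {f : α → β} {d : ℕ}

lemma card_sym2_map_fiber_le (hf : ∀ y, #{a | f a = y} ≤ d) (q : Sym2 β) :
    #{p : Sym2 α | p.map f = q} ≤ d ^ 2 := by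
  classical
  induction q with | _ u v
  have hsub : ({p : Sym2 α | p.map f = s(u, v)} : Finset (Sym2 α)) ⊆
      image₂ (fun a b => s(a, b)) {a | f a = u} {a | f a = v} := by
    intro p hp
    induction p with | _ a b
    simp only [mem_filter, mem_univ, true_and, Sym2.map_mk] at hp
    simp only [mem_image₂, mem_filter, mem_univ, true_and]
    rcases Sym2.eq_iff.1 hp with ⟨hau, hbv⟩ | ⟨hav, hbu⟩
    · exact ⟨a, hau, b, hbv, rfl⟩
    · exact ⟨b, hbu, a, hav, Sym2.eq_swap⟩
  calc #{p : Sym2 α | p.map f = s(u, v)}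
      ≤ #{a | f a = u} * #{a | f a = v} := (card_le_card hsub).trans (card_image₂_le _ _ _)
    _ ≤ d * d := Nat.mul_le_mul (hf u) (hf v)
    _ = d ^ 2 := (sq d).symm

lemma card_sym2_map_family_le {ι : Type*} [Fintype ι] [DecidableEq ι]
    (hf : ∀ y, #{a | f a = y} ≤ d) (q : ι → Sym2 β) :
    #{g : ι → Sym2 α | ∀ i, (g i).map f = q i} ≤ (d ^ 2) ^ Fintype.card ι := by
  have hpi : ({g : ι → Sym2 α | ∀ i, (g i).map f = q i} : Finset (ι → Sym2 α)) =
      Fintype.piFinset fun i => {p : Sym2 α | p.map f = q i} := by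
    ext g
    simp
  rw [hpi, Fintype.card_piFinset, ← card_univ]
  exact prod_le_pow_card _ _ _ fun i _ => card_sym2_map_fiber_le hf (q i)

end Fibers

section Placements

variable {V α β : Type*} [Fintype V] [DecidableEq V] [Fintype α] [DecidableEq α] [Fintype β]
  [DecidableEq β] (H : SimpleGraph V) [DecidableRel H.Adj] (f : α → β) {d : ℕ}

/-- The potential copies of `H` in a multigraph with vertex set `β` and set of half-edges `α`,
where `f` maps a half-edge to its vertex: an injective choice of vertices and of pairs of
half-edges joining them, which need not be matched pairs. -/
def placements : Finset ((V → β) × (H.edgeSet → Sym2 α)) :=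
  {x | x.1.Injective ∧ x.2.Injective ∧ ∀ e, (x.2 e).map f = e.val.map x.1}

/-- The copies of `H` in the multigraph formed by matching the half-edges along `ω`, that is, the
placements that use matched pairs only. -/
def placementsIn (ω : Perm α) : Finset ((V → β) × (H.edgeSet → Sym2 α)) :=
  {x ∈ placements H f | univ.image x.2 ⊆ matchedPairs ω}

variable {f}

lemma card_placements_le (hf : ∀ y, #{a | f a = y} ≤ d) :
    #(placements H f) ≤
      (d ^ 2) ^ Fintype.card H.edgeSet * Fintype.card β ^ Fintype.card V := by
  have hfiber : ∀ vtx ∈ (univ : Finset (V → β)), #{x ∈ placements H f | x.1 = vtx} ≤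
      (d ^ 2) ^ Fintype.card H.edgeSet := by
    intro vtx _
    refine (card_le_card_of_injOn Prod.snd ?_ ?_).trans
      (card_sym2_map_family_le hf fun e : H.edgeSet => e.val.map vtx)
    · intro x hx
      obtain ⟨hplace, rfl⟩ := mem_filter.1 (mem_coe.1 hx)
      simpa using (mem_filter.1 hplace).2.2.2
    · intro x hx x' hx' heq
      exact Prod.ext ((mem_filter.1 hx).2.trans (mem_filter.1 hx').2.symm) heq
  simpa using card_le_mul_card_image_of_maps_to (fun x _ => mem_univ x.1) _ hfiber

lemma sum_card_placementsIn :
    ∑ ω ∈ perfectMatchings α, #(placementsIn H f ω) =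
      ∑ x ∈ placements H f, #(matchingsContaining (univ.image x.2)) := by
  simpa only [placementsIn, matchingsContaining, bipartiteAbove, bipartiteBelow] using
    sum_card_bipartiteAbove_eq_sum_card_bipartiteBelow (s := perfectMatchings α)
      (t := placements H f) fun ω x => univ.image x.2 ⊆ matchedPairs ω

lemma sum_card_placementsIn_mul_pow_le (hf : ∀ y, #{a | f a = y} ≤ d) :
    (∑ ω ∈ perfectMatchings α, #(placementsIn H f ω)) *
        Fintype.card α ^ Fintype.card H.edgeSet ≤
      (2 * d ^ 2) ^ Fintype.card H.edgeSet * (Fintype.card H.edgeSet)! *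
        Fintype.card β ^ Fintype.card V * #(perfectMatchings α) := by
  set k := Fintype.card H.edgeSet
  have hmatch : ∀ x ∈ placements H f, #(matchingsContaining (univ.image x.2)) *
      Fintype.card α ^ k ≤ #(perfectMatchings α) * (2 ^ k * k !) := by
    intro x hx
    have hcard : #(univ.image x.2) = k := card_image_of_injective _ (mem_filter.1 hx).2.2.1
    simpa only [hcard] using card_matchingsContaining_mul_pow_le (univ.image x.2)
  calc (∑ ω ∈ perfectMatchings α, #(placementsIn H f ω)) * Fintype.card α ^ k
      = ∑ x ∈ placements H f, #(matchingsContaining (univ.image x.2)) * Fintype.card α ^ k := by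
        rw [sum_card_placementsIn, sum_mul]
    _ ≤ #(placements H f) * (#(perfectMatchings α) * (2 ^ k * k !)) :=
        sum_le_card_nsmul _ _ _ hmatch
    _ ≤ (d ^ 2) ^ k * Fintype.card β ^ Fintype.card V *
          (#(perfectMatchings α) * (2 ^ k * k !)) := by
        gcongr
        exact card_placements_le H hf
    _ = (2 * d ^ 2) ^ k * k ! * Fintype.card β ^ Fintype.card V * #(perfectMatchings α) := by
        ring

end Placements

section CubicConfigurationModel

lemma card_filter_blk_eq_le {N : ℕ} (u : Fin N) : #{a : Fin (3 * N) | blk a = u} ≤ 3 := by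
  refine (card_le_card_of_injOn (t := range 3) (fun a => a.val % 3) ?_ ?_).trans_eq (card_range 3)
  · intro a _
    simp [Nat.mod_lt]
  · intro a ha b hb (h : a.val % 3 = b.val % 3)
    have hdiv : a.val / 3 = b.val / 3 :=
      congrArg Fin.val ((mem_filter.1 ha).2.trans (mem_filter.1 hb).2.symm)
    exact Fin.ext (by omega)

lemma sum_Omega_eq_sum_perfectMatchings {M : Type*} [AddCommMonoid M] {N : ℕ}
    (F : Perm (Fin (3 * N)) → M) :
    ∑ ω : Omega N, F ω.val = ∑ ω ∈ perfectMatchings (Fin (3 * N)), F ω :=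
  (sum_subtype _ (fun _ => mem_perfectMatchings) F).symm

lemma card_Omega (N : ℕ) : Nat.card (Omega N) = #(perfectMatchings (Fin (3 * N))) := by
  rw [Nat.card_eq_fintype_card, ← card_univ, card_eq_sum_ones, card_eq_sum_ones]
  exact sum_Omega_eq_sum_perfectMatchings fun _ => 1

variable {V : Type*} (H : SimpleGraph V)

lemma copies_eq_card_placementsIn [Fintype V] [DecidableEq V] [DecidableRel H.Adj] {N : ℕ}
    (ω : Omega N) : copies H ω = #(placementsIn H blk ω.val) := by
  refine Nat.subtype_card _ fun x => ?_
  simp only [placementsIn, placements, mem_filter, mem_univ, true_and, image_subset_iff,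
    forall_const, mem_matchedPairs, eq_comm (b := x.2 _), forall_and]
  tauto

lemma copies_Omega_zero [Nonempty V] (ω : Omega 0) : copies H ω = 0 := by
  simp [copies]

lemma sum_copies_mul_pow_le [Finite V] (N : ℕ) :
    (∑ ω : Omega N, copies H ω) * N ^ Nat.card H.edgeSet ≤
      6 ^ Nat.card H.edgeSet * (Nat.card H.edgeSet)! * N ^ Nat.card V * Nat.card (Omega N) := by
  classical
  have := Fintype.ofFinite V
  have bound := sum_card_placementsIn_mul_pow_le H (card_filter_blk_eq_le (N := N))
  rw [← sum_Omega_eq_sum_perfectMatchings, ← card_Omega] at bound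
  simp only [← copies_eq_card_placementsIn, ← Nat.card_eq_fintype_card, Nat.card_fin] at bound
  set k := Nat.card H.edgeSet
  refine Nat.le_of_mul_le_mul_left ?_ (pow_pos three_pos k)
  calc 3 ^ k * ((∑ ω : Omega N, copies H ω) * N ^ k)
      = (∑ ω : Omega N, copies H ω) * (3 * N) ^ k := by ring
    _ ≤ (2 * 3 ^ 2) ^ k * k ! * N ^ Nat.card V * Nat.card (Omega N) := bound
    _ = (3 * 6) ^ k * k ! * N ^ Nat.card V * Nat.card (Omega N) := by norm_num
    _ = 3 ^ k * (6 ^ k * k ! * N ^ Nat.card V * Nat.card (Omega N)) := by rw [mul_pow]; ring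

theorem expected_copies_of_dense_subgraph_general [Finite V] {N : ℕ} (_hN : Even N) :
    (∑ ω : Omega N, (copies H ω : ℝ)) / (Nat.card (Omega N) : ℝ) ≤
      6 ^ Nat.card H.edgeSet * ((Nat.card H.edgeSet)! : ℝ) * (N : ℝ) ^ Nat.card V /
        (N : ℝ) ^ Nat.card H.edgeSet := by
  rcases eq_or_ne ((N : ℝ) ^ Nat.card H.edgeSet) 0 with hzero | hne
  · obtain ⟨hN0, hk⟩ := pow_eq_zero_iff'.1 hzero
    obtain rfl : N = 0 := Nat.cast_eq_zero.1 hN0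
    have : Nonempty V := by
      by_contra hV
      have : IsEmpty V := not_nonempty_iff.1 hV
      exact hk (by simp)
    simp only [copies_Omega_zero, Nat.cast_zero, sum_const_zero, zero_div]
    positivity
  · rw [le_div_iff₀ (hne.symm.lt_of_le (by positivity)), div_mul_eq_mul_div]
    exact div_le_of_le_mul₀ (by positivity) (by positivity)
      (by exact_mod_cast sum_copies_mul_pow_le H N)

end CubicConfigurationModel

/-- Theorem (Bollobás): if `H` is a fixed finite simple graph with nonempty vertex and
edge sets and more edges than vertices, the expected number of copies of `H` in the
configuration-model multigraph is `O(1/N)`. -/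
theorem expected_copies_of_dense_subgraph {V : Type*} [Fintype V] [Nonempty V]
    (H : SimpleGraph V) (hE : H.edgeSet.Nonempty)
    (hdense : Nat.card V < Nat.card H.edgeSet) :
    ∃ C : ℝ, 0 < C ∧ ∀ N : ℕ, Even N →
      (∑ ω : Omega N, (copies H ω : ℝ)) / (Nat.card (Omega N) : ℝ) ≤ C / N := by
  refine ⟨6 ^ Nat.card H.edgeSet * (Nat.card H.edgeSet)!, by positivity, fun N hN => ?_⟩
  exact (expected_copies_of_dense_subgraph_general H hN).trans
    (mul_pow_div_pow_le_div_of_lt (by positivity) hdense N)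
end
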